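/- (Goto–Nakamura) Let (A, 𝔪) be a d-dimensional complete equidimensional reduced Noetherian local ring of prime characteristic p and let J ⊆ A be an 𝔪-primary ideal generated by d elements (a full system of parameters). Then ℓ_A(A/J^*) ≤ e(J). Moreover, if ℓ_A(A/J^*) = e(J) for some such 𝔪-primary parameter ideal J, then A is F-rational, i.e., every parameter ideal of A is tightly closed. -/

import Mathlib

open IsLocalRing Filter Topology
open scoped TensorProduct

/-- The Frobenius bracket power `I^{[q]}`: the ideal generated by `q`-th powers of elements of `I`. -/
def Ideal.bracketPow {R : Type*} [CommRing R] (I : Ideal R) (q : ℕ) : Ideal R :=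
  Ideal.span ((fun a => a ^ q) '' (I : Set R))

/-- `R°`: the set of elements of `R` not contained in any minimal prime ideal. -/
def ringCirc (R : Type*) [CommRing R] : Set R :=
  {c | ∀ P ∈ minimalPrimes R, c ∉ P}

/-- The tight closure of an ideal `I` in a ring of characteristic `p`:
`x ∈ I^*` iff there is `c ∈ R°` with `c * x ^ (p ^ e) ∈ I^{[p^e]}` for all sufficiently
large `e`. -/
def tightClosure {R : Type*} [CommRing R] (p : ℕ) (I : Ideal R) : Set R :=
  {x | ∃ c ∈ ringCirc R, ∃ N : ℕ, ∀ e : ℕ, N ≤ e → c * x ^ p ^ e ∈ I.bracketPow (p ^ e)}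

/-- `x` is integral over the ideal `J`: there are `n ≥ 1` and `aᵢ ∈ Jⁱ` with
`x ^ n + a₁ x ^ (n-1) + ⋯ + aₙ = 0`. -/
def IsIntegralOverIdeal {R : Type*} [CommRing R] (J : Ideal R) (x : R) : Prop :=
  ∃ n : ℕ, 0 < n ∧ ∃ a : ℕ → R, (∀ i ∈ Finset.Icc 1 n, a i ∈ J ^ i) ∧
    x ^ n + ∑ i ∈ Finset.Icc 1 n, a i * x ^ (n - i) = 0

/-- `R` is F-finite: `F_*R` is a finitely generated `R`-module, i.e. there is a finite set
of generators `s` such that every element of `R` is an `R`-linear combination of elements of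
`s` with respect to the Frobenius-twisted action `r • b = r ^ p * b`. -/
def FFinite (R : Type*) [CommRing R] (p : ℕ) : Prop :=
  ∃ s : Finset R, ∀ x : R, ∃ a : R → R, x = ∑ b ∈ s, a b ^ p * b

/-- The map `cF^e : R → F^e_* R`, `x ↦ c * x ^ (p ^ e)`, splits as an `R`-module
homomorphism: there is an additive `φ : R → R` with `φ (r ^ (p ^ e) * x) = r * φ x`
for all `r, x` and `φ c = 1`. -/
def FrobSplitsWith {R : Type*} [CommRing R] (p : ℕ) (c : R) (e : ℕ) : Prop :=
  ∃ φ : R →+ R, (∀ r x : R, φ (r ^ p ^ e * x) = r * φ x) ∧ φ c = 1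

/-- `R` is strongly F-regular: F-finite, reduced, and for every `c ∈ R°` some `cF^e` splits. -/
def StronglyFRegular (R : Type*) [CommRing R] (p : ℕ) : Prop :=
  FFinite R p ∧ IsReduced R ∧ ∀ c ∈ ringCirc R, ∃ e : ℕ, FrobSplitsWith p c e

/-- `R` is F-pure: the Frobenius map `R → F_* R` splits as an `R`-module homomorphism. -/
def FPure (R : Type*) [CommRing R] (p : ℕ) : Prop :=
  ∃ φ : R →+ R, (∀ r x : R, φ (r ^ p * x) = r * φ x) ∧ φ 1 = 1

/-- A regular local ring: a Noetherian local ring whose maximal ideal can be generated by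
`dim R` elements. -/
def IsRegularLocal (R : Type*) [CommRing R] [IsLocalRing R] : Prop :=
  IsNoetherianRing R ∧ ∃ (d : ℕ) (x : Fin d → R),
    ringKrullDim R = d ∧ IsLocalRing.maximalIdeal R = Ideal.span (Set.range x)

/-- The height of an ideal: the infimum of the heights of the primes containing it. -/
noncomputable def idealHeight {R : Type*} [CommRing R] (I : Ideal R) : ℕ∞ :=
  ⨅ (P : PrimeSpectrum R) (_ : I ≤ P.asIdeal), Order.height P

/-- A parameter ideal: an ideal generated by `ht I` elements. -/
def IsParameterIdeal {R : Type*} [CommRing R] (I : Ideal R) : Prop :=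
  ∃ n : ℕ, idealHeight I = n ∧ ∃ x : Fin n → R, I = Ideal.span (Set.range x)

/-- A local ring is F-rational if every parameter ideal is tightly closed. -/
def FRationalLocal (R : Type*) [CommRing R] [IsLocalRing R] (p : ℕ) : Prop :=
  ∀ I : Ideal R, IsParameterIdeal I → tightClosure p I = ↑I

/-- A Cohen–Macaulay local ring: every full system of parameters `x₁, …, x_d`
(`d = dim B`) is a regular sequence, i.e. `(x₁, …, xᵢ) : xᵢ₊₁ = (x₁, …, xᵢ)`. -/
def IsCohenMacaulayLocalRing (B : Type*) [CommRing B] [IsLocalRing B] : Prop :=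
  ∀ d : ℕ, ringKrullDim B = d →
    ∀ x : Fin d → B, (∀ i, x i ∈ IsLocalRing.maximalIdeal B) →
      (Ideal.span (Set.range x)).radical = IsLocalRing.maximalIdeal B →
      ∀ i : Fin d,
        Submodule.colon (Ideal.span (x '' {j | (j : ℕ) < (i : ℕ)})) (Ideal.span {x i}) =
          Ideal.span (x '' {j | (j : ℕ) < (i : ℕ)})

/-- The length `ℓ_R M` of a module, as an extended natural number: the supremum of the
lengths of chains of submodules below `⊤`. -/
noncomputable def moduleLength (R M : Type*) [Ring R] [AddCommGroup M] [Module R M] : ℕ∞ :=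
  Order.height (⊤ : Submodule R M)

/-- The Frobenius endomorphism `x ↦ x ^ p`, as a ring homomorphism, in prime
characteristic `p`. -/
noncomputable def frobeniusRingHom (R : Type*) [CommRing R] (p : ℕ) [Fact p.Prime] [CharP R p] :
    R →+* R :=
  frobenius R p

/-!
By Cohen's structure theorem `A` is a finite module, of rank `r` say, over `B = k⟦X₁, …, X_d⟧`,
where the `Xᵢ` map to the given generators of `J`. Up to multiplication by some `c ≠ 0` in `B`, the
module `A` agrees with `B ^ r`.

Counting monomials in `B ^ r` gives `r ≤ e(J)`. Frobenius and cancellation of powers of `∏ Xᵢ` in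
`B ^ r` show that `J^*` contains the limit closure `L = ⋃ₙ (x₁ⁿ⁺¹, …, x_dⁿ⁺¹) : (x₁ ⋯ x_d)ⁿ`; here
`c ∈ A°` because `A` is equidimensional. Lifts to `A` of `k`-independent elements of `A / L` are
independent over `B`, as the socle of `B / (X₁ⁿ⁺¹, …, X_dⁿ⁺¹)` is spanned by `∏ Xᵢⁿ`. Hence
`ℓ(A / J^*) ≤ ℓ(A / L) ≤ r ≤ e(J)`.

If equality holds, the lifts of a `k`-basis of `A / L` also generate `A` over `B`, because the rings
`B / (X₁ⁿ⁺¹, …, X_dⁿ⁺¹)` are Gorenstein. So `A` is free over `B`, the generators of `J` form a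
regular sequence, and comparing lengths gives `J^* = L = J`. Being a regular sequence that generates
a tightly closed ideal passes from one system of parameters to any other by exchanging one element
at a time. Finally, by Krull's intersection theorem, any parameter ideal is an intersection of
parameter ideals of full length, obtained by adding high powers of further parameters.
-/

namespace GotoNakamura

section CoefficientField

open MvPolynomial

theorem subsingleton_h1Cotangent_iff {R S : Type*} [CommRing R] [CommRing S] [Algebra R S] :
    Subsingleton (Algebra.H1Cotangent R S) ↔
      ∀ f : MvPolynomial S R, aeval (id : S → S) f = 0 →
        (∀ i, aeval (id : S → S) (pderiv i f) = 0) →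
          f ∈ RingHom.ker (aeval (R := R) (id : S → S)) ^ 2 := by
  let P := Algebra.Generators.self R S
  have hker : P.toExtension.ker = RingHom.ker (aeval (R := R) (id : S → S)) :=
    P.ker_eq_ker_aeval_val
  have complex_eq_zero (f : P.toExtension.ker) :
      P.toExtension.cotangentComplex (.mk f) = 0 ↔
        ∀ i, aeval (id : S → S) (pderiv i f.1) = 0 := by
    rw [Algebra.Extension.cotangentComplex_mk, ← P.cotangentSpaceBasis.repr.map_eq_zero_iff,
      Finsupp.ext_iff]
    exact forall_congr' fun i ↦ by
      rw [P.cotangentSpaceBasis_repr_one_tmul]; rfl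
  rw [Algebra.H1Cotangent, Algebra.Extension.subsingleton_h1Cotangent, injective_iff_map_eq_zero]
  constructor
  · intro h f hf hdf
    have hfP : f ∈ P.toExtension.ker := hker ▸ hf
    have := h _ ((complex_eq_zero ⟨f, hfP⟩).mpr hdf)
    rw [Algebra.Extension.Cotangent.mk_eq_zero_iff] at this
    exact Ideal.pow_right_mono hker.le 2 this
  · intro h x hx
    obtain ⟨f, rfl⟩ := Algebra.Extension.Cotangent.mk_surjective x
    rw [Algebra.Extension.Cotangent.mk_eq_zero_iff]
    exact Ideal.pow_right_mono hker.ge 2 (h f.1 (hker.le f.2) ((complex_eq_zero f).mp hx))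

/-- The library has this for finitely generated extensions. A polynomial relation and the vanishing
of its differential involve finitely many elements of `K`, so the general case reduces to that. -/
theorem formallySmooth_of_perfectField {k K : Type*} [Field k] [PerfectField k] [Field K]
    [Algebra k K] : Algebra.FormallySmooth k K where
  projective_kaehlerDifferential := inferInstance
  subsingleton_h1Cotangent := by
    refine subsingleton_h1Cotangent_iff.mpr fun f hf hdf ↦ ?_
    let L := IntermediateField.adjoin k (f.vars : Set K)
    have : Algebra.EssFiniteType k L := IntermediateField.essFiniteType_iff.mpr ⟨f.vars, rfl⟩
    obtain ⟨g, hg⟩ := exists_rename_eq_of_vars_subset_range f (Subtype.val : L → K)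
      Subtype.val_injective (by rw [Subtype.range_val]; exact IntermediateField.subset_adjoin k _)
    have aeval_rename (h : MvPolynomial L k) :
        aeval (id : K → K) (rename Subtype.val h) = algebraMap L K (aeval id h) := by
      rw [MvPolynomial.aeval_rename, ← aeval_algebraMap_apply]
      rfl
    have hg0 : aeval (id : L → L) g = 0 := by
      rw [← hg, aeval_rename] at hf
      exact (map_eq_zero _).mp hf
    have hdg (i : L) : aeval (id : L → L) (pderiv i g) = 0 := by
      have hi := hdf i
      rw [← hg, pderiv_rename Subtype.val_injective, aeval_rename] at hi
      exact (map_eq_zero _).mp hi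
    have hker : RingHom.ker (aeval (R := k) (id : L → L)) ≤
        (RingHom.ker (aeval (R := k) (id : K → K))).comap (rename Subtype.val).toRingHom := by
      intro h hh
      exact (aeval_rename h).trans (by rw [(RingHom.mem_ker).mp hh, map_zero])
    rw [← hg]
    exact Ideal.le_comap_pow _ 2 (Ideal.pow_right_mono hker 2
      (subsingleton_h1Cotangent_iff.mp Algebra.FormallySmooth.subsingleton_h1Cotangent g hg0 hdg))

theorem exists_coefficientField (A : Type*) [CommRing A] [IsLocalRing A] (p : ℕ) [Fact p.Prime]
    [CharP A p] [IsAdicComplete (maximalIdeal A) A] :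
    ∃ g : ResidueField A →+* A, (residue A).comp g = RingHom.id _ := by
  let _ : Algebra (ZMod p) A := ZMod.algebra A p
  have : Algebra.FormallySmooth (ZMod p) (ResidueField A) := formallySmooth_of_perfectField
  let f : ResidueField A →ₐ[ZMod p] A ⧸ maximalIdeal A := AlgHom.id _ _
  obtain ⟨g, hg⟩ := Algebra.FormallySmooth.exists_mkₐ_comp_eq_of_isAdicComplete f
  exact ⟨g.toRingHom, RingHom.ext fun x => congrArg (fun h => h x) hg⟩

end CoefficientField

/-- The ideal `(x₁ⁿ, …, x_dⁿ)` of a finite family `x`. -/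
def powerIdeal {ι R : Type*} [CommRing R] (x : ι → R) (n : ℕ) : Ideal R :=
  Ideal.span (Set.range fun i ↦ x i ^ n)

theorem powerIdeal_one {ι R : Type*} [CommRing R] (x : ι → R) :
    powerIdeal x 1 = Ideal.span (Set.range x) := by
  simp only [powerIdeal, pow_one]

theorem map_powerIdeal {ι R S : Type*} [CommRing R] [CommRing S] (f : R →+* S) (x : ι → R)
    (n : ℕ) : (powerIdeal x n).map f = powerIdeal (f ∘ x) n := by
  rw [powerIdeal, Ideal.map_span, ← Set.range_comp]
  simp [powerIdeal, Function.comp_def]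

section PowerSeries

open MvPowerSeries

variable {σ R : Type*} [CommRing R]

theorem mem_span_X_pow_of_coeff_eq_zero {T : Finset σ} {n : ℕ} {f : MvPowerSeries σ R}
    (h : ∀ α : σ →₀ ℕ, (∀ i ∈ T, α i < n) → coeff α f = 0) :
    f ∈ Ideal.span ((fun i ↦ (X i : MvPowerSeries σ R) ^ n) '' T) := by
  classical
  induction T using Finset.induction_on generalizing f with
  | empty =>
    rw [show f = 0 from MvPowerSeries.ext fun α ↦ h α (by simp)]
    exact Submodule.zero_mem _
  | insert i T _ ih =>
    -- Split off the part of `f` not divisible by `X i ^ n`.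
    let g : MvPowerSeries σ R := fun α ↦ if n ≤ α i then 0 else coeff α f
    have coeff_g (α : σ →₀ ℕ) : coeff α g = if n ≤ α i then 0 else coeff α f := rfl
    have hg : g ∈ Ideal.span ((fun i ↦ (X i : MvPowerSeries σ R) ^ n) '' T) := by
      refine ih fun α hα ↦ ?_
      rw [coeff_g]
      split_ifs with hi
      · rfl
      · exact h α (Finset.forall_mem_insert _ _ _ |>.mpr ⟨not_le.mp hi, hα⟩)
    have hdvd : X i ^ n ∣ f - g :=
      X_pow_dvd_iff.mpr fun α hα ↦ by rw [map_sub, coeff_g, if_neg hα.not_ge, sub_self]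
    rw [← sub_add_cancel f g, Finset.coe_insert, Set.image_insert_eq, Ideal.span_insert]
    exact Submodule.add_mem_sup (Ideal.mem_span_singleton.mpr hdvd) hg

theorem mem_span_X_pow_iff {T : Finset σ} {n : ℕ} {f : MvPowerSeries σ R} :
    f ∈ Ideal.span ((fun i ↦ (X i : MvPowerSeries σ R) ^ n) '' T) ↔
      ∀ α : σ →₀ ℕ, (∀ i ∈ T, α i < n) → coeff α f = 0 := by
  classical
  refine ⟨fun hf α hα ↦ ?_, mem_span_X_pow_of_coeff_eq_zero⟩
  induction hf using Submodule.span_induction generalizing α with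
  | mem f hf =>
    obtain ⟨i, hi, rfl⟩ := hf
    exact X_pow_dvd_iff.mp dvd_rfl α (hα i hi)
  | zero => simp
  | add f g _ _ hf hg => rw [map_add, hf α hα, hg α hα, add_zero]
  | smul r f _ hf =>
    rw [smul_eq_mul, coeff_mul]
    refine Finset.sum_eq_zero fun β hβ ↦ ?_
    rw [hf β.2 fun i hi ↦ (?_ : β.2 i ≤ α i).trans_lt (hα i hi), mul_zero]
    rw [← Finset.HasAntidiagonal.mem_antidiagonal.mp hβ, Finsupp.add_apply]
    exact le_add_self

theorem mem_span_X_of_X_mul_mem {T : Finset σ} {i : σ} (hi : i ∉ T) {f : MvPowerSeries σ R}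
    (hf : X i * f ∈ Ideal.span (X '' (T : Set σ))) : f ∈ Ideal.span (X '' (T : Set σ)) := by
  classical
  have mem_iff (g : MvPowerSeries σ R) := mem_span_X_pow_iff (T := T) (n := 1) (f := g)
  simp only [pow_one] at mem_iff
  rw [mem_iff] at hf ⊢
  intro α hα
  have := hf (Finsupp.single i 1 + α) fun j hj ↦ by
    simpa [Finsupp.single_apply, (ne_of_mem_of_not_mem hj hi).symm] using hα j hj
  rwa [X, coeff_add_monomial_mul, one_mul] at this

theorem le_order_of_mem_span_X_pow {n : ℕ} {f : MvPowerSeries σ R}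
    (hf : f ∈ Ideal.span (Set.range (X : σ → MvPowerSeries σ R)) ^ n) : (n : ℕ∞) ≤ f.order := by
  have span_le : Ideal.span (Set.range (X : σ → MvPowerSeries σ R)) ≤
      RingHom.ker (constantCoeff (σ := σ) (R := R)) := by
    rw [Ideal.span_le]
    rintro _ ⟨i, rfl⟩
    simp
  induction n generalizing f with
  | zero => simp
  | succ n ih =>
    rw [pow_succ] at hf
    refine Submodule.mul_induction_on hf (fun a ha b hb ↦ ?_)
      fun a b ha hb ↦ (le_min ha hb).trans min_order_le_add
    rw [Nat.cast_succ]
    exact (add_le_add (ih ha) (one_le_order_iff_constCoeff_eq_zero.mpr (span_le hb))).trans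
      le_order_mul

section Finite

/-- The exponent `(n, …, n)` of the monomial `∏ i, X i ^ n`. -/
noncomputable def constExponent (σ : Type*) [Finite σ] (n : ℕ) : σ →₀ ℕ :=
  Finsupp.equivFunOnFinite.symm fun _ ↦ n

@[simp]
theorem constExponent_apply [Finite σ] (n : ℕ) (i : σ) : constExponent σ n i = n := rfl

theorem prod_X_pow [Fintype σ] (n : ℕ) :
    (∏ i, (X i : MvPowerSeries σ R)) ^ n = monomial (constExponent σ n) 1 := by
  have prod_monomial (T : Finset σ) : ∏ i ∈ T, (X i : MvPowerSeries σ R) ^ n =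
      monomial (∑ i ∈ T, Finsupp.single i n) 1 := by
    classical
    induction T using Finset.induction_on with
    | empty => simp
    | insert i T hi ih =>
      rw [Finset.prod_insert hi, Finset.sum_insert hi, ih, X_pow_eq, monomial_mul_monomial, one_mul]
  rw [← Finset.prod_pow, prod_monomial]
  congr
  ext i
  classical simp [Finsupp.finsetSum_apply, Finsupp.single_apply]

theorem mem_powerIdeal_X_succ_iff [Finite σ] {n : ℕ} {f : MvPowerSeries σ R} :
    f ∈ powerIdeal (X : σ → MvPowerSeries σ R) (n + 1) ↔
      ∀ α ≤ constExponent σ n, coeff α f = 0 := by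
  have := Fintype.ofFinite σ
  have := mem_span_X_pow_iff (T := Finset.univ) (n := n + 1) (f := f)
  simpa [powerIdeal, Nat.lt_succ_iff, Finsupp.le_def] using this

theorem mem_powerIdeal_X_of_prod_X_pow_mul_mem [Fintype σ] {m n : ℕ} {f : MvPowerSeries σ R}
    (hf : (∏ i, X i) ^ m * f ∈ powerIdeal (X : σ → MvPowerSeries σ R) (m + n + 1)) :
    f ∈ powerIdeal (X : σ → MvPowerSeries σ R) (n + 1) := by
  rw [mem_powerIdeal_X_succ_iff] at hf ⊢
  intro α hα
  have := hf (constExponent σ m + α) fun i ↦ by simpa using hα i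
  rwa [prod_X_pow, coeff_add_monomial_mul, one_mul] at this

/-- The socle of `R⟦X⟧ / (Xᵢ ^ (n + 1))` is spanned by `∏ X i ^ n`; `μ` is the monomial moving a
lowest surviving term of the family `g` there. -/
theorem exists_mul_sub_C_mul_prod_X_pow_mem [Fintype σ] {ι : Type*} {n : ℕ}
    {g : ι → MvPowerSeries σ R} {j : ι}
    (hj : g j ∉ powerIdeal (X : σ → MvPowerSeries σ R) (n + 1)) :
    ∃ (μ : MvPowerSeries σ R) (c : ι → R), (∃ j, c j ≠ 0) ∧
      ∀ j, μ * g j - C (c j) * (∏ i, X i) ^ n ∈ powerIdeal (X : σ → MvPowerSeries σ R) (n + 1) := by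
  classical
  let survives (α : σ →₀ ℕ) : Prop := α ≤ constExponent σ n ∧ ∃ j, coeff α (g j) ≠ 0
  obtain ⟨α, ⟨hαn, hα⟩, hmin⟩ : ∃ α, survives α ∧ ∀ β < α, ¬ survives β := by
    rw [mem_powerIdeal_X_succ_iff] at hj
    push Not at hj
    obtain ⟨α, hα⟩ := hj
    obtain ⟨β, hβ⟩ := exists_minimal_of_wellFoundedLT survives ⟨α, hα.1, j, hα.2⟩
    exact ⟨β, hβ.prop, fun γ hγ ↦ hβ.not_prop_of_lt hγ⟩
  refine ⟨monomial (constExponent σ n - α) 1, fun j ↦ coeff α (g j), hα, fun j ↦ ?_⟩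
  rw [mem_powerIdeal_X_succ_iff]
  intro γ hγ
  rw [map_sub, coeff_monomial_mul, coeff_C_mul, prod_X_pow, coeff_monomial, one_mul]
  obtain rfl | hne := eq_or_ne γ (constExponent σ n)
  · rw [if_pos rfl, if_pos tsub_le_self, tsub_tsub_cancel_of_le hαn, mul_one, sub_self]
  rw [if_neg hne, mul_zero, sub_zero, ite_eq_right_iff]
  intro hle
  have hlt : γ - (constExponent σ n - α) < α := by
    refine lt_of_le_of_ne (by rwa [tsub_le_iff_right, add_tsub_cancel_of_le hαn]) fun heq ↦ hne ?_
    rw [← tsub_add_cancel_of_le hle, heq, add_tsub_cancel_of_le hαn]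
  by_contra hcoeff
  exact hmin _ hlt ⟨tsub_le_self.trans hγ, j, hcoeff⟩

theorem exists_coeff_constExponent_mul_eq [Finite σ] (n : ℕ) (φ : MvPowerSeries σ R →ₗ[R] R)
    (hφ : ∀ f ∈ powerIdeal (X : σ → MvPowerSeries σ R) (n + 1), φ f = 0) :
    ∃ y : MvPowerSeries σ R, ∀ f, coeff (constExponent σ n) (y * f) = φ f := by
  classical
  let e := constExponent σ n
  refine ⟨∑ α ∈ Finset.Iic e, monomial (e - α) (φ (monomial α 1)), fun f ↦ ?_⟩
  let truncation := ∑ α ∈ Finset.Iic e, coeff α f • monomial α (1 : R)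
  have htrunc : f - truncation ∈ powerIdeal (X : σ → MvPowerSeries σ R) (n + 1) := by
    rw [mem_powerIdeal_X_succ_iff]
    intro α hα
    simp [truncation, e, map_sum, coeff_monomial, hα]
  calc coeff e ((∑ α ∈ Finset.Iic e, monomial (e - α) (φ (monomial α 1))) * f)
      = φ truncation := by
        simp only [truncation, Finset.sum_mul, map_sum, map_smul, smul_eq_mul]
        refine Finset.sum_congr rfl fun α hα ↦ ?_
        rw [coeff_monomial_mul, if_pos tsub_le_self,
          tsub_tsub_cancel_of_le (Finset.mem_Iic.mp hα), mul_comm]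
    _ = φ f := (sub_eq_zero.mp ((map_sub φ _ _).symm.trans (hφ _ htrunc))).symm

/-- The annihilator of the annihilator of `b` in the Gorenstein ring `k⟦X⟧ / (Xᵢ ^ (n + 1))`
is `(b)`. -/
theorem mem_span_singleton_sup_powerIdeal_X [Finite σ] {k : Type*} [Field k] {n : ℕ}
    {b g : MvPowerSeries σ k}
    (h : ∀ y, y * b ∈ powerIdeal (X : σ → MvPowerSeries σ k) (n + 1) →
      y * g ∈ powerIdeal (X : σ → MvPowerSeries σ k) (n + 1)) :
    g ∈ Ideal.span {b} ⊔ powerIdeal X (n + 1) := by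
  by_contra hg
  obtain ⟨φ, hφg, hφ⟩ := Submodule.exists_le_ker_of_notMem
    (p := (Ideal.span {b} ⊔ powerIdeal X (n + 1)).restrictScalars k) hg
  obtain ⟨y, hy⟩ := exists_coeff_constExponent_mul_eq n φ
    fun f hf ↦ hφ (Ideal.mem_sup_right hf : f ∈ Ideal.span {b} ⊔ powerIdeal X (n + 1))
  refine hφg ?_
  rw [← hy]
  refine mem_powerIdeal_X_succ_iff.mp (h y (mem_powerIdeal_X_succ_iff.mpr fun α hα ↦ ?_)) _ le_rfl
  have hαb : b * monomial (constExponent σ n - α) 1 ∈ Ideal.span {b} ⊔ powerIdeal X (n + 1) :=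
    Ideal.mem_sup_left (Ideal.mul_mem_right _ _ (Ideal.mem_span_singleton_self b))
  have := coeff_add_mul_monomial α (constExponent σ n - α) (y * b) (1 : k)
  rwa [add_tsub_cancel_of_le hα, mul_assoc, hy, show φ _ = 0 from hφ hαb, mul_one, eq_comm] at this

end Finite

theorem pow_le_factorial_mul_card_degree_lt (d n : ℕ) : ∃ S : Finset (Fin d →₀ ℕ),
    (∀ α ∈ S, α.degree < n + 1) ∧ (n + 1) ^ d ≤ d.factorial * S.card := by
  classical
  -- Homogenize: exponents of degree `≤ n` in `d` variables are those of degree `n` in `d + 1`.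
  let homogeneous := Finset.finsuppAntidiag (Finset.univ : Finset (Fin (d + 1))) n
  have mem_homogeneous {β : Fin (d + 1) →₀ ℕ} (hβ : β ∈ homogeneous) :
      β 0 + ∑ i, β (Fin.succ i) = n := by
    rw [← Fin.sum_univ_succ]
    exact (Finset.mem_finsuppAntidiag.mp hβ).1
  have tail_injOn : Set.InjOn Finsupp.tail (homogeneous : Set (Fin (d + 1) →₀ ℕ)) := by
    intro β hβ γ hγ h
    have hsucc (i : Fin d) : β (Fin.succ i) = γ (Fin.succ i) := DFunLike.congr_fun h i
    have hsum := Finset.sum_congr (rfl : (Finset.univ : Finset (Fin d)) = _) fun i _ ↦ hsucc i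
    have := mem_homogeneous hβ
    have := mem_homogeneous hγ
    ext i
    exact Fin.cases (by omega) hsucc i
  refine ⟨homogeneous.image Finsupp.tail, fun α hα ↦ ?_, ?_⟩
  · obtain ⟨β, hβ, rfl⟩ := Finset.mem_image.mp hα
    have := mem_homogeneous hβ
    simp only [Finsupp.degree_eq_sum, Finsupp.tail_apply]
    omega
  · rw [Finset.card_image_of_injOn tail_injOn, Finset.card_finsuppAntidiag_nat_eq_choose,
      Finset.card_fin, show d + 1 + n - 1 = n + d by omega, Nat.choose_symm_add,
      ← Nat.ascFactorial_eq_factorial_mul_choose]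
    exact Nat.pow_succ_le_ascFactorial (n + 1) d

end PowerSeries

section Length

variable {k A : Type*} [Field k] [CommRing A] [IsLocalRing A]

theorem isFiniteLength_quotient_of_radical_eq_maximalIdeal [IsNoetherianRing A] {I : Ideal A}
    (hI : I.radical = maximalIdeal A) : IsFiniteLength A (A ⧸ I) := by
  rw [isFiniteLength_iff_isNoetherian_isArtinian]
  refine ⟨inferInstance, ?_⟩
  have : IsArtinianRing (A ⧸ I) := by
    apply IsLocalRing.quotient_artinian_of_mem_minimalPrimes_of_isLocalRing
    rw [← Ideal.radical_minimalPrimes, hI, Ideal.minimalPrimes_eq_subsingleton_self]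
    rfl
  exact isArtinian_of_surjective_algebraMap (R := A ⧸ I) Ideal.Quotient.mk_surjective

theorem length_eq_of_surjective_algebraMap_residueField [Algebra k A]
    (hk : Function.Surjective (algebraMap k (ResidueField A))) (M : Type*) [AddCommGroup M]
    [Module k M] [Module A M] [IsScalarTower k A M] : Module.length k M = Module.length A M := by
  have hκ : Function.Surjective (algebraMap (ResidueField k) (ResidueField A)) := fun y ↦ by
    obtain ⟨c, rfl⟩ := hk y
    exact ⟨residue k c, rfl⟩
  rw [IsLocalRing.length_restrictScalars k A M, Module.length_eq_of_surjective hκ,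
    Module.length_eq_one (ResidueField A) (ResidueField A), mul_one]

end Length

section AdicCompletion

theorem exists_mvPowerSeries_ringHom {R A σ : Type*} [CommRing R] [CommRing A] [Finite σ]
    (I : Ideal A) [hI : IsAdicComplete I A] (g : R →+* A) {x : σ → A} (hx : ∀ i, x i ∈ I) :
    ∃ φ : MvPowerSeries σ R →+* A,
      φ.comp MvPowerSeries.C = g ∧ ∀ i, φ (MvPowerSeries.X i) = x i := by
  let _ : UniformSpace R := ⊥
  have : DiscreteTopology R := ⟨rfl⟩
  let _ : TopologicalSpace A := I.adicTopology
  have : IsTopologicalRing A := I.ringFilterBasis.isTopologicalRing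
  let _ : UniformSpace A := IsTopologicalAddGroup.rightUniformSpace A
  have : IsUniformAddGroup A := isUniformAddGroup_of_addCommGroup
  have hadic : IsAdic I := rfl
  obtain ⟨_, _⟩ := hadic.isAdicComplete_iff.mp hI
  have : IsLinearTopology A A := IsLinearTopology.mk_of_hasBasis (ι := ℕ) A (p := fun _ ↦ True)
    (s := fun n ↦ I ^ n) hadic.hasBasis_nhds_zero
  have hev : MvPowerSeries.HasEval x := by
    refine ⟨fun i ↦ hadic.hasBasis_nhds_zero.tendsto_right_iff.mpr fun n _ ↦ ?_, by simp⟩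
    filter_upwards [eventually_ge_atTop n] with m hm
    exact Ideal.pow_le_pow_right hm (Ideal.pow_mem_pow (hx i) m)
  have hg : Continuous g := continuous_of_discreteTopology
  refine ⟨MvPowerSeries.eval₂Hom hg hev, RingHom.ext fun c ↦ ?_, fun i ↦ ?_⟩
  · rw [RingHom.comp_apply, MvPowerSeries.coe_eval₂Hom, MvPowerSeries.eval₂_C]
  · rw [MvPowerSeries.coe_eval₂Hom, MvPowerSeries.eval₂_X]

variable {R : Type*} [CommRing R]

theorem mem_smul_top_pi_iff {ι : Type*} [Finite ι] {I : Ideal R} {x : ι → R} :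
    x ∈ (I • ⊤ : Submodule R (ι → R)) ↔ ∀ i, x i ∈ I := by
  classical
  have := Fintype.ofFinite ι
  refine ⟨fun h i ↦ ?_, fun h ↦ ?_⟩
  · induction h using Submodule.smul_induction_on' with
    | smul r hr n _ => exact Ideal.mul_mem_right _ _ hr
    | add x _ y _ hx hy => exact Ideal.add_mem _ hx hy
  · rw [pi_eq_sum_univ x]
    exact Submodule.sum_mem _ fun i _ ↦ Submodule.smul_mem_smul (h i) trivial

theorem isPrecomplete_pi {ι : Type*} [Finite ι] (I : Ideal R) [hI : IsPrecomplete I R] :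
    IsPrecomplete I (ι → R) := by
  refine ⟨fun f hf ↦ ?_⟩
  have hcoord (i : ι) : ∃ L : R, ∀ n, f n i ≡ L [SMOD (I ^ n • ⊤ : Submodule R R)] := by
    refine IsPrecomplete.prec hI fun {m n} hmn ↦ ?_
    have := hf hmn
    rw [SModEq.sub_mem, mem_smul_top_pi_iff] at this
    simpa [SModEq.sub_mem] using this i
  choose L hL using hcoord
  refine ⟨L, fun n ↦ ?_⟩
  rw [SModEq.sub_mem, mem_smul_top_pi_iff]
  intro i
  simpa [SModEq.sub_mem] using hL i n

theorem finite_of_finite_quotient_smul_top {M : Type*} [AddCommGroup M] [Module R M] (I : Ideal R)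
    [IsPrecomplete I R] [IsHausdorff I M] [Module.Finite R (M ⧸ (I • ⊤ : Submodule R M))] :
    Module.Finite R M := by
  obtain ⟨n, f, hf⟩ := Module.Finite.exists_fin' R (M ⧸ (I • ⊤ : Submodule R M))
  obtain ⟨F, hF⟩ := Module.projective_lifting_property (Submodule.mkQ _) f
    (Submodule.mkQ_surjective (I • ⊤ : Submodule R M))
  have : IsPrecomplete I (Fin n → R) := isPrecomplete_pi I
  exact .of_surjective F (surjective_of_mkQ_comp_surjective (I := I) (hF ▸ hf))

theorem finite_of_radical_map_maximalIdeal_eq {A : Type*} [CommRing A] [IsLocalRing R]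
    [IsLocalRing A] [IsNoetherianRing A] [Algebra R A] [IsLocalHom (algebraMap R A)]
    [IsPrecomplete (maximalIdeal R) R] [Module.Finite (ResidueField R) (ResidueField A)]
    (h : ((maximalIdeal R).map (algebraMap R A)).radical = maximalIdeal A) :
    Module.Finite R A := by
  let J := (maximalIdeal R).map (algebraMap R A)
  have : IsHausdorff (maximalIdeal R) A := by
    rw [← IsHausdorff.map_algebraMap_iff (S := A)]
    refine IsHausdorff.of_isLocalRing _ _ fun htop ↦ (maximalIdeal.isMaximal A).ne_top ?_
    rw [← h, htop, Ideal.radical_top]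
  have hlen : IsFiniteLength R (A ⧸ J) := by
    rw [← Module.length_ne_top_iff, IsLocalRing.length_restrictScalars R A (A ⧸ J)]
    refine WithTop.mul_ne_top (Module.length_ne_top_iff.mpr
      (isFiniteLength_quotient_of_radical_eq_maximalIdeal h)) ?_
    rw [Module.length_eq_finrank]
    exact ENat.natCast_ne_top _
  have := (isFiniteLength_iff_isNoetherian_isArtinian.mp hlen).1
  have : Module.Finite R (A ⧸ (maximalIdeal R • ⊤ : Submodule R A)) := by
    rw [Ideal.smul_top_eq_map]
    exact .equiv (Submodule.Quotient.restrictScalarsEquiv R J).symm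
  exact finite_of_finite_quotient_smul_top (maximalIdeal R)

end AdicCompletion

section MaximalIdeal

variable {k σ : Type*} [Field k] [Finite σ]

theorem maximalIdeal_mvPowerSeries :
    maximalIdeal (MvPowerSeries σ k) = Ideal.span (Set.range MvPowerSeries.X) := by
  have mem_span_iff (f : MvPowerSeries σ k) := mem_powerIdeal_X_succ_iff (n := 0) (f := f)
  have constExponent_zero : constExponent σ 0 = 0 := Finsupp.ext fun _ ↦ rfl
  simp only [powerIdeal, zero_add, pow_one, constExponent_zero, nonpos_iff_eq_zero,
    forall_eq] at mem_span_iff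
  ext f
  rw [mem_maximalIdeal, mem_nonunits_iff, MvPowerSeries.isUnit_iff_constantCoeff,
    isUnit_iff_ne_zero, not_not]
  exact (mem_span_iff f).symm

theorem ringKrullDim_mvPowerSeries_le : ringKrullDim (MvPowerSeries σ k) ≤ Nat.card σ := by
  refine (ringKrullDim_le_spanFinrank_maximalIdeal _).trans ?_
  rw [maximalIdeal_mvPowerSeries, Nat.cast_le, ← Set.image_univ]
  refine (Submodule.spanFinrank_span_le_ncard_of_finite (Set.toFinite _)).trans
    ((Set.ncard_image_le Set.finite_univ).trans ?_)
  rw [Set.ncard_univ]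

theorem finite_of_radical_map_span_X_eq {A : Type*} [CommRing A] [IsLocalRing A]
    [IsNoetherianRing A] [Algebra k A] [Algebra (MvPowerSeries σ k) A]
    [IsScalarTower k (MvPowerSeries σ k) A]
    (hk : Function.Surjective (algebraMap k (ResidueField A)))
    (h : ((Ideal.span (Set.range MvPowerSeries.X)).map
      (algebraMap (MvPowerSeries σ k) A)).radical = maximalIdeal A) :
    Module.Finite (MvPowerSeries σ k) A := by
  rw [← maximalIdeal_mvPowerSeries] at h
  have : IsLocalHom (algebraMap (MvPowerSeries σ k) A) :=
    ((local_hom_TFAE _).out 2 0).mp (h ▸ Ideal.le_radical)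
  have : IsPrecomplete (maximalIdeal (MvPowerSeries σ k)) (MvPowerSeries σ k) := by
    rw [maximalIdeal_mvPowerSeries]
    infer_instance
  have : Module.Finite (ResidueField (MvPowerSeries σ k)) (ResidueField A) := by
    refine .of_surjective (Algebra.linearMap _ _) fun y ↦ ?_
    obtain ⟨c, rfl⟩ := hk y
    refine ⟨residue _ (algebraMap k _ c), ?_⟩
    change residue A (algebraMap _ A (algebraMap k (MvPowerSeries σ k) c)) =
      residue A (algebraMap k A c)
    rw [← IsScalarTower.algebraMap_apply]
  exact finite_of_radical_map_maximalIdeal_eq h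

end MaximalIdeal

section TorsionFree

variable {R A : Type*} [CommRing R] [CommRing A] [Algebra R A] [Algebra.IsIntegral R A]

theorem ringKrullDim_le_of_isIntegral : ringKrullDim A ≤ ringKrullDim R :=
  Order.krullDim_le_of_strictMono (PrimeSpectrum.comap (algebraMap R A))
    fun _ _ h ↦ Ideal.IsIntegral.comap_lt_comap h

theorem under_eq_bot_of_ringKrullDim_le [IsDomain R] {n : ℕ} (hR : ringKrullDim R ≤ n) {P : Ideal A}
    (hP : ringKrullDim (A ⧸ P) = n) : P.under R = ⊥ := by
  rw [eq_bot_iff]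
  intro f hf
  by_contra hne
  have hdim : (n : WithBot ℕ∞) + 1 ≤ n := calc
    (n : WithBot ℕ∞) + 1 = ringKrullDim (A ⧸ P) + 1 := by rw [hP]
    _ ≤ ringKrullDim (R ⧸ P.under R) + 1 := by gcongr; exact ringKrullDim_le_of_isIntegral
    _ ≤ ringKrullDim (R ⧸ Ideal.span {f}) + 1 := by
      gcongr
      exact ringKrullDim_le_of_surjective (Ideal.Quotient.factor
        ((Ideal.span_singleton_le_iff_mem _).mpr hf)) (Ideal.Quotient.factor_surjective _)
    _ ≤ ringKrullDim R :=
      ringKrullDim_quotient_succ_le_of_nonZeroDivisor (mem_nonZeroDivisors_of_ne_zero hne)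
    _ ≤ n := hR
  exact absurd (Nat.cast_le.mp (by exact_mod_cast hdim)) (Nat.not_succ_le_self n)

end TorsionFree

theorem mem_nonZeroDivisors_of_mem_ringCirc {A : Type*} [CommRing A] [IsReduced A] {c : A}
    (hc : c ∈ ringCirc A) : c ∈ nonZeroDivisors A := by
  rw [mem_nonZeroDivisors_iff_right]
  intro a hac
  have : a ∈ nilradical A := by
    rw [nilradical, ← Ideal.sInf_minimalPrimes, Ideal.mem_sInf]
    intro P hP
    exact (hP.1.1.mem_or_mem (hac ▸ P.zero_mem)).resolve_right (hc P hP)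
  rwa [nilradical_eq_zero] at this

theorem isTorsionFree_of_algebraMap_mem_ringCirc {R A : Type*} [CommRing R] [Nontrivial R]
    [CommRing A] [IsReduced A] [Algebra R A]
    (h : ∀ b : R, b ≠ 0 → algebraMap R A b ∈ ringCirc A) : Module.IsTorsionFree R A := by
  refine ⟨fun r hr a b hab ↦ ?_⟩
  have hreg := mem_nonZeroDivisors_of_mem_ringCirc (h r hr.ne_zero)
  simp only [Algebra.smul_def] at hab
  exact (mul_cancel_left_mem_nonZeroDivisors hreg).mp hab

section LimitClosure

variable {ι R : Type*} [CommRing R]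

theorem prod_pow_mul_mem_powerIdeal [Fintype ι] {x : ι → R} {n : ℕ} (m : ℕ) {r : R}
    (hr : r ∈ powerIdeal x n) : (∏ i, x i) ^ m * r ∈ powerIdeal x (m + n) := by
  induction hr using Submodule.span_induction with
  | mem r hr =>
    obtain ⟨i, rfl⟩ := hr
    obtain ⟨y, hy⟩ := Finset.dvd_prod_of_mem x (Finset.mem_univ i)
    have : (∏ i, x i) ^ m * x i ^ n = y ^ m * x i ^ (m + n) := by rw [hy]; ring
    exact this ▸ Ideal.mul_mem_left _ _ (Ideal.subset_span ⟨i, rfl⟩)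
  | zero => simp
  | add r s _ _ hr hs => exact mul_add ((∏ i, x i) ^ m) r s ▸ Ideal.add_mem _ hr hs
  | smul a r _ hr =>
    rw [smul_eq_mul, mul_left_comm]
    exact Ideal.mul_mem_left _ _ hr

variable {M : Type*} [AddCommGroup M] [Module R M]

theorem prod_pow_smul_mem_powerIdeal_smul [Fintype ι] {x : ι → R} {n : ℕ} (m : ℕ) {z : M}
    (hz : z ∈ (powerIdeal x n • ⊤ : Submodule R M)) :
    (∏ i, x i) ^ m • z ∈ (powerIdeal x (m + n) • ⊤ : Submodule R M) := by
  refine Submodule.smul_induction_on hz (fun r hr y _ ↦ ?_) fun y z hy hz ↦ ?_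
  · rw [smul_smul]
    exact Submodule.smul_mem_smul (prod_pow_mul_mem_powerIdeal m hr) trivial
  · exact smul_add ((∏ i, x i) ^ m) y z ▸ Submodule.add_mem _ hy hz

/-- The limit closure `⋃ₙ (x₁ⁿ⁺¹, …, x_dⁿ⁺¹)M : (x₁ ⋯ x_d)ⁿ` of `(x₁, …, x_d)M` in `M`: the kernel
of the map from `M` to the direct limit of the modules `M / (x₁ⁿ, …, x_dⁿ)M`. It sits inside the
tight closure when `M` is the ring, and the quotient by it is never longer than the rank. -/
def limitClosure [Fintype ι] (x : ι → R) (M : Type*) [AddCommGroup M] [Module R M] :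
    Submodule R M where
  carrier := {z | ∃ n, (∏ i, x i) ^ n • z ∈ (powerIdeal x (n + 1) • ⊤ : Submodule R M)}
  zero_mem' := ⟨0, by simp⟩
  add_mem' := by
    rintro y z ⟨m, hy⟩ ⟨n, hz⟩
    refine ⟨m + n, ?_⟩
    have hy' := prod_pow_smul_mem_powerIdeal_smul n hy
    have hz' := prod_pow_smul_mem_powerIdeal_smul m hz
    rw [smul_smul, ← pow_add, ← add_assoc] at hy' hz'
    rw [smul_add]
    exact Submodule.add_mem _ (by rwa [add_comm n m] at hy') hz'
  smul_mem' r z := fun ⟨n, hz⟩ ↦ ⟨n, by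
    rw [smul_comm]
    exact Submodule.smul_mem _ r hz⟩

theorem exists_smul_mem_span_of_finrank_le [IsDomain R] [Module.Finite R M] [Fintype ι]
    {v : ι → M} (hv : LinearIndependent R v) (hcard : Module.finrank R M ≤ Fintype.card ι) :
    ∃ c : R, c ≠ 0 ∧ ∀ m : M, c • m ∈ Submodule.span R (Set.range v) := by
  let N := Submodule.span R (Set.range v)
  have hN : Module.finrank R N = Fintype.card ι := finrank_span_eq_card hv
  have htorsion : Module.IsTorsion R (M ⧸ N) := by
    rw [← Module.finrank_eq_zero_iff_isTorsion]
    have := N.finrank_quotient_add_finrank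
    omega
  obtain ⟨c, hc, hc0⟩ := Submodule.annihilator_top_inter_nonZeroDivisors htorsion
  refine ⟨c, nonZeroDivisors.ne_zero hc0, fun m ↦ ?_⟩
  rw [← Submodule.Quotient.mk_eq_zero, Submodule.Quotient.mk_smul]
  exact Submodule.mem_annihilator.mp hc _ trivial

theorem exists_linearMap_comp_eq_smul [IsDomain R] [Module.Finite R M] : ∃ c : R, c ≠ 0 ∧
    ∃ (φ : M →ₗ[R] Fin (Module.finrank R M) → R) (ψ : (Fin (Module.finrank R M) → R) →ₗ[R] M),
      (∀ m, ψ (φ m) = c • m) ∧ ∀ v, φ (ψ v) = c • v := by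
  obtain ⟨v, hv⟩ := exists_linearIndependent_of_le_finrank (le_refl (Module.finrank R M))
  obtain ⟨c, hc, hcv⟩ := exists_smul_mem_span_of_finrank_le hv (by simp)
  let ψ := Fintype.linearCombination R v
  have hψ : Function.Injective ψ := hv.fintypeLinearCombination_injective
  let e := LinearEquiv.ofInjective ψ hψ
  have hrange (m : M) : c • m ∈ LinearMap.range ψ := by
    rw [Fintype.range_linearCombination]
    exact hcv m
  refine ⟨c, hc, e.symm ∘ₗ (LinearMap.lsmul R M c).codRestrict _ hrange, ψ, fun m ↦ ?_, fun w ↦ ?_⟩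
  · exact congrArg Subtype.val (e.apply_symm_apply ⟨c • m, hrange m⟩)
  · apply hψ
    rw [map_smul]
    exact congrArg Subtype.val (e.apply_symm_apply ⟨c • ψ w, hrange (ψ w)⟩)

theorem smul_mem_smul_top_of_mul_mem {κ : Type*} [Finite κ] {φ : M →ₗ[R] κ → R}
    {ψ : (κ → R) →ₗ[R] M} {b c : R} (hψφ : ∀ m, ψ (φ m) = c • m) {I I' : Ideal R}
    (hI : ∀ r, b * r ∈ I → r ∈ I') {m : M} (hm : b • m ∈ (I • ⊤ : Submodule R M)) :
    c • m ∈ (I' • ⊤ : Submodule R M) := by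
  have hφ : φ (b • m) ∈ (I • ⊤ : Submodule R (κ → R)) :=
    Submodule.smul_top_le_comap_smul_top I φ hm
  rw [mem_smul_top_pi_iff] at hφ
  have hm' : φ m ∈ (I' • ⊤ : Submodule R (κ → R)) :=
    mem_smul_top_pi_iff.mpr fun i ↦ hI _ (by simpa using hφ i)
  exact hψφ m ▸ Submodule.smul_top_le_comap_smul_top I' ψ hm'

end LimitClosure

theorem mem_of_forall_mem_sup_maximalIdeal_pow {R : Type*} [CommRing R] [IsLocalRing R]
    [IsNoetherianRing R] {I : Ideal R} {r : R} (h : ∀ n, r ∈ I ⊔ maximalIdeal R ^ n) : r ∈ I := by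
  rw [← Ideal.Quotient.eq_zero_iff_mem]
  refine IsHausdorff.haus (I := maximalIdeal R) inferInstance _ fun n ↦ ?_
  obtain ⟨a, ha, b, hb, rfl⟩ := Submodule.mem_sup.mp (h n)
  rw [SModEq.zero, map_add, Ideal.Quotient.eq_zero_iff_mem.mpr ha, zero_add]
  rw [← mul_one b, map_mul]
  exact Submodule.smul_mem_smul hb (trivial : (1 : R ⧸ I) ∈ ⊤)

theorem powerIdeal_le_pow {ι R : Type*} [CommRing R] {x : ι → R} {I : Ideal R} (hx : ∀ i, x i ∈ I)
    (n : ℕ) : powerIdeal x n ≤ I ^ n := by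
  rw [powerIdeal, Ideal.span_le]
  rintro _ ⟨i, rfl⟩
  exact Ideal.pow_mem_pow (hx i) n

section PowerSeriesModule

open MvPowerSeries

instance {σ R : Type*} [CommRing R] [IsDomain R] : IsDomain (MvPowerSeries σ R) :=
  NoZeroDivisors.to_isDomain _

variable {k σ : Type*} [Field k]

theorem eq_zero_of_forall_mem_powerIdeal_X [Finite σ] {f : MvPowerSeries σ k}
    (h : ∀ n, f ∈ powerIdeal (X : σ → MvPowerSeries σ k) (n + 1)) : f = 0 := by
  ext α
  exact mem_powerIdeal_X_succ_iff.mp (h α.degree) α fun i ↦ Finsupp.le_degree i α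

variable [Fintype σ] {M : Type*} [AddCommGroup M] [Module (MvPowerSeries σ k) M]

theorem limitClosure_X_le_of_free [Module.Finite (MvPowerSeries σ k) M]
    [Module.Free (MvPowerSeries σ k) M] :
    limitClosure (X : σ → MvPowerSeries σ k) M ≤
      powerIdeal (X : σ → MvPowerSeries σ k) 1 • ⊤ := by
  rintro m ⟨n, hm⟩
  let e := (Module.Free.chooseBasis (MvPowerSeries σ k) M).equivFun
  have := smul_mem_smul_top_of_mul_mem (φ := e.toLinearMap) (ψ := e.symm.toLinearMap) (c := 1)
    (by simp) (fun f ↦ mem_powerIdeal_X_of_prod_X_pow_mul_mem (m := n) (n := 0)) hm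
  rwa [one_smul] at this

variable [Module k M] [IsScalarTower k (MvPowerSeries σ k) M]

section LinearIndependent

variable {ι : Type*} {a : ι → M}
  (ha : LinearIndependent k ((limitClosure (X : σ → MvPowerSeries σ k) M).mkQ ∘ a))
include ha

theorem mem_powerIdeal_X_of_sum_smul_mem [Fintype ι] {n : ℕ} {g : ι → MvPowerSeries σ k}
    (hg : ∑ i, g i • a i ∈
      (powerIdeal (X : σ → MvPowerSeries σ k) (n + 1) • ⊤ : Submodule (MvPowerSeries σ k) M))
    (i : ι) : g i ∈ powerIdeal (X : σ → MvPowerSeries σ k) (n + 1) := by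
  by_contra hi
  obtain ⟨μ, c, ⟨j, hj⟩, hμ⟩ := exists_mul_sub_C_mul_prod_X_pow_mem hi
  refine hj (Fintype.linearIndependent_iff.mp ha c ?_ j)
  have hlim : ∑ i, (C (c i) : MvPowerSeries σ k) • a i ∈
      limitClosure (X : σ → MvPowerSeries σ k) M := by
    refine ⟨n, ?_⟩
    have : (∏ i, X i : MvPowerSeries σ k) ^ n • ∑ i, (C (c i) : MvPowerSeries σ k) • a i =
        μ • ∑ i, g i • a i - ∑ i, (μ * g i - C (c i) * (∏ i, X i) ^ n) • a i := by
      simp only [Finset.smul_sum, smul_smul, sub_smul, Finset.sum_sub_distrib, sub_sub_cancel,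
        mul_comm]
    rw [this]
    exact Submodule.sub_mem _ (Submodule.smul_mem _ _ hg)
      (Submodule.sum_mem _ fun i _ ↦ Submodule.smul_mem_smul (hμ i) trivial)
  have hC (i : ι) : (C (c i) : MvPowerSeries σ k) • a i = c i • a i :=
    algebraMap_smul (MvPowerSeries σ k) (c i) (a i)
  simp only [hC] at hlim
  exact (map_sum (limitClosure X M).mkQ _ _).symm.trans
    ((Submodule.Quotient.mk_eq_zero _).mpr hlim)

theorem linearIndependent_of_linearIndependent_mkQ_limitClosure [Finite ι] :
    LinearIndependent (MvPowerSeries σ k) a := by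
  have := Fintype.ofFinite ι
  rw [Fintype.linearIndependent_iff]
  exact fun g hg i ↦ eq_zero_of_forall_mem_powerIdeal_X fun n ↦
    mem_powerIdeal_X_of_sum_smul_mem ha (hg ▸ Submodule.zero_mem _) i

theorem span_eq_top_of_linearIndependent_mkQ_limitClosure [Fintype ι]
    [Module.Finite (MvPowerSeries σ k) M] [Module.IsTorsionFree (MvPowerSeries σ k) M]
    (hcard : Module.finrank (MvPowerSeries σ k) M ≤ Fintype.card ι) :
    Submodule.span (MvPowerSeries σ k) (Set.range a) = ⊤ := by
  rw [eq_top_iff]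
  intro m _
  obtain ⟨b, hb, hbm⟩ := exists_smul_mem_span_of_finrank_le
    (linearIndependent_of_linearIndependent_mkQ_limitClosure ha) hcard
  obtain ⟨g, hg⟩ := (Submodule.mem_span_range_iff_exists_fun _).mp (hbm m)
  have hdvd (i : ι) : g i ∈ Ideal.span {b} := by
    refine mem_of_forall_mem_sup_maximalIdeal_pow fun n ↦ ?_
    have hle : powerIdeal (X : σ → MvPowerSeries σ k) (n + 1) ≤ maximalIdeal _ ^ n :=
      (powerIdeal_le_pow (fun i ↦ maximalIdeal_mvPowerSeries (k := k) (σ := σ) ▸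
        Ideal.subset_span ⟨i, rfl⟩) (n + 1)).trans (Ideal.pow_le_pow_right n.le_succ)
    refine sup_le_sup_left hle _ (mem_span_singleton_sup_powerIdeal_X fun y hy ↦ ?_)
    refine mem_powerIdeal_X_of_sum_smul_mem ha (g := fun i ↦ y * g i) ?_ i
    simp only [mul_smul, ← Finset.smul_sum, hg]
    rw [← mul_smul]
    exact Submodule.smul_mem_smul hy trivial
  choose h hh using fun i ↦ Ideal.mem_span_singleton.mp (hdvd i)
  rw [Submodule.mem_span_range_iff_exists_fun]
  refine ⟨h, smul_right_injective M hb ?_⟩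
  simp only [← hg, hh, mul_smul, Finset.smul_sum]

end LinearIndependent

variable [Module.Finite (MvPowerSeries σ k) M]

theorem length_quotient_limitClosure_le_finrank :
    Module.length k (M ⧸ limitClosure (X : σ → MvPowerSeries σ k) M) ≤
      Module.finrank (MvPowerSeries σ k) M := by
  rw [Module.length_eq_rank, ← map_natCast Cardinal.toENat]
  refine OrderHomClass.mono _ (rank_le fun s hs ↦ ?_)
  choose a ha using fun v : s ↦ Submodule.mkQ_surjective _ v.1
  have hli : LinearIndependent k ((limitClosure (X : σ → MvPowerSeries σ k) M).mkQ ∘ a) := by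
    rwa [show (limitClosure X M).mkQ ∘ a = Subtype.val from funext ha]
  simpa using (linearIndependent_of_linearIndependent_mkQ_limitClosure hli).fintype_card_le_finrank

theorem free_of_length_quotient_limitClosure_eq [Module.IsTorsionFree (MvPowerSeries σ k) M]
    (h : Module.length k (M ⧸ limitClosure (X : σ → MvPowerSeries σ k) M) =
      Module.finrank (MvPowerSeries σ k) M) :
    Module.Free (MvPowerSeries σ k) M := by
  have : Module.Finite k (M ⧸ limitClosure (X : σ → MvPowerSeries σ k) M) := by
    have hlen := Module.length_ne_top_iff.mp (h ▸ ENat.natCast_ne_top _)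
    have := (isFiniteLength_iff_isNoetherian_isArtinian.mp hlen).1
    infer_instance
  rw [Module.length_eq_finrank, Nat.cast_inj] at h
  let v := Module.finBasis k (M ⧸ limitClosure (X : σ → MvPowerSeries σ k) M)
  choose a ha using fun i ↦ Submodule.mkQ_surjective _ (v i)
  have hv : LinearIndependent k ((limitClosure (X : σ → MvPowerSeries σ k) M).mkQ ∘ a) := by
    rw [show (limitClosure X M).mkQ ∘ a = v from funext ha]
    exact v.linearIndependent
  exact .of_basis (.mk (linearIndependent_of_linearIndependent_mkQ_limitClosure hv)
    (span_eq_top_of_linearIndependent_mkQ_limitClosure hv (by simp [h])).ge)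

end PowerSeriesModule

section Multiplicity

theorem natCast_card_le_length {k M ι : Type*} [Field k] [AddCommGroup M] [Module k M] [Fintype ι]
    {v : ι → M} (hv : LinearIndependent k v) : (Fintype.card ι : ℕ∞) ≤ Module.length k M := by
  rw [Module.length_eq_rank, ← map_natCast Cardinal.toENat]
  refine OrderHomClass.mono _ ?_
  simpa using hv.cardinal_lift_le_rank

theorem le_order_of_mul_mem_span_X_pow {R σ : Type*} [CommRing R] [NoZeroDivisors R] {n : ℕ}
    {c f : MvPowerSeries σ R} (hc : c ≠ 0)
    (h : c * f ∈ Ideal.span (Set.range MvPowerSeries.X) ^ (n + c.order.toNat)) :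
    (n : ℕ∞) ≤ f.order := by
  have := le_order_of_mem_span_X_pow h
  have hc_top : c.order ≠ ⊤ := MvPowerSeries.order_eq_top_iff.not.mpr hc
  rwa [MvPowerSeries.order_mul, Nat.cast_add, ENat.natCast_toNat hc_top, add_comm,
    ENat.add_le_add_iff_left hc_top] at this

theorem exists_card_mul_finrank_le_length {k σ M : Type*} [Field k] [AddCommGroup M]
    [Module k M] [Module (MvPowerSeries σ k) M] [IsScalarTower k (MvPowerSeries σ k) M]
    [Module.Finite (MvPowerSeries σ k) M] :
    ∃ s : ℕ, ∀ (n : ℕ) (S : Finset (σ →₀ ℕ)), (∀ α ∈ S, α.degree < n) →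
      ((S.card * Module.finrank (MvPowerSeries σ k) M : ℕ) : ℕ∞) ≤
        Module.length k (M ⧸ (Ideal.span (Set.range (MvPowerSeries.X : σ → MvPowerSeries σ k)) ^
          (n + s) • ⊤ : Submodule (MvPowerSeries σ k) M)) := by
  classical
  obtain ⟨c, hc, φ, ψ, -, hφψ⟩ := exists_linearMap_comp_eq_smul (R := MvPowerSeries σ k) (M := M)
  refine ⟨c.order.toNat, fun n S hS ↦ ?_⟩
  set N := (Ideal.span (Set.range (MvPowerSeries.X : σ → MvPowerSeries σ k)) ^
    (n + c.order.toNat) • ⊤ : Submodule (MvPowerSeries σ k) M)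
  -- Applying `φ`, a relation modulo `N` has order `≥ n + order c` after multiplication by `c`.
  let r := Module.finrank (MvPowerSeries σ k) M
  let w (j : S × Fin r) : M := ψ (Pi.single j.2 (MvPowerSeries.monomial j.1.1 1))
  have hli : LinearIndependent k (N.mkQ ∘ w) := by
    rw [Fintype.linearIndependent_iff]
    intro l hl ⟨α, i⟩
    let f (i : Fin r) : MvPowerSeries σ k := ∑ α : S, MvPowerSeries.monomial α.1 (l (α, i))
    have hsum : ∑ j, l j • w j = ψ f := by
      simp only [w, ← ψ.map_smul_of_tower, ← map_sum]
      congr 1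
      ext1 i
      simp [f, Fintype.sum_prod_type, Pi.single_apply, ← map_smul]
    have hψf : ψ f ∈ N := by
      rw [← hsum, ← Submodule.Quotient.mk_eq_zero]
      exact (map_sum N.mkQ _ _).trans hl
    have hcf := Submodule.smul_top_le_comap_smul_top _ φ hψf
    rw [Submodule.mem_comap, hφψ, mem_smul_top_pi_iff] at hcf
    have horder := le_order_of_mul_mem_span_X_pow hc (hcf i)
    have := MvPowerSeries.coeff_of_lt_order ((Nat.cast_lt.mpr (hS α α.2)).trans_le horder)
    simpa [f, MvPowerSeries.coeff_monomial, Subtype.val_inj] using this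
  simpa [r] using natCast_card_le_length hli

/-- The value of the Hilbert–Samuel multiplicity `e(I)` of an ideal `I` in a `d`-dimensional ring,
as a predicate so that the existence of the limit is part of the data. -/
def HasHilbertSamuelMultiplicity {A : Type*} [CommRing A] (I : Ideal A) (d : ℕ) (e : ℝ) : Prop :=
  Tendsto (fun n : ℕ ↦ (d.factorial : ℝ) * (Module.length A (A ⧸ I ^ n)).toNat / (n : ℝ) ^ d)
    atTop (𝓝 e)

theorem le_of_tendsto_div_pow {d s : ℕ} {r e : ℝ} {u : ℕ → ℝ}
    (hu : ∀ᶠ n : ℕ in atTop, r * (n : ℝ) ^ d ≤ u (n + s))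
    (h : Tendsto (fun n : ℕ ↦ u n / (n : ℝ) ^ d) atTop (𝓝 e)) : r ≤ e := by
  have hlim : Tendsto (fun n : ℕ ↦ r * ((n : ℝ) / (n + (s : ℝ))) ^ d) atTop (𝓝 r) := by
    simpa using ((tendsto_natCast_div_add_atTop (s : ℝ)).pow d).const_mul r
  refine le_of_tendsto_of_tendsto hlim (h.comp (tendsto_add_atTop_nat s)) ?_
  filter_upwards [hu, eventually_gt_atTop 0] with n hn hpos
  have : 0 < ((n + s : ℕ) : ℝ) ^ d := by positivity
  calc r * ((n : ℝ) / (n + (s : ℝ))) ^ d = r * (n : ℝ) ^ d / ((n + s : ℕ) : ℝ) ^ d := by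
        rw [div_pow, mul_div_assoc, Nat.cast_add]
    _ ≤ u (n + s) / ((n + s : ℕ) : ℝ) ^ d := by gcongr

theorem length_quotient_restrictScalars {k B A : Type*} [Field k] [CommRing B] [CommRing A]
    [IsLocalRing A] [Algebra k B] [Algebra k A] [Algebra B A] [IsScalarTower k B A]
    (hk : Function.Surjective (algebraMap k (ResidueField A))) (I : Ideal A) :
    Module.length k (A ⧸ I.restrictScalars B) = Module.length A (A ⧸ I) := by
  rw [← length_eq_of_surjective_algebraMap_residueField hk]
  exact ((Submodule.Quotient.restrictScalarsEquiv B I).restrictScalars k).length_eq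

theorem finrank_le_of_hasHilbertSamuelMultiplicity {k A : Type*} {d : ℕ} [Field k] [CommRing A]
    [IsLocalRing A] [IsNoetherianRing A] [Algebra k A] [Algebra (MvPowerSeries (Fin d) k) A]
    [IsScalarTower k (MvPowerSeries (Fin d) k) A] [Module.Finite (MvPowerSeries (Fin d) k) A]
    (hk : Function.Surjective (algebraMap k (ResidueField A))) {J : Ideal A}
    (hJ : (powerIdeal MvPowerSeries.X 1).map (algebraMap (MvPowerSeries (Fin d) k) A) = J)
    (hJrad : J.radical = maximalIdeal A) {e : ℝ} (he : HasHilbertSamuelMultiplicity J d e) :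
    (Module.finrank (MvPowerSeries (Fin d) k) A : ℝ) ≤ e := by
  rw [powerIdeal_one] at hJ
  obtain ⟨s, hs⟩ := exists_card_mul_finrank_le_length (k := k) (σ := Fin d) (M := A)
  refine le_of_tendsto_div_pow (s := s) ?_ he
  filter_upwards [eventually_gt_atTop 0] with n hn
  obtain ⟨n, rfl⟩ := Nat.exists_eq_add_one.mpr hn
  obtain ⟨S, hdeg, hcard⟩ := pow_le_factorial_mul_card_degree_lt d n
  have hlen := hs (n + 1) S hdeg
  rw [Ideal.smul_top_eq_map, Ideal.map_pow, hJ, length_quotient_restrictScalars hk] at hlen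
  have hfin : Module.length A (A ⧸ J ^ (n + 1 + s)) ≠ ⊤ :=
    Module.length_ne_top_iff.mpr (isFiniteLength_quotient_of_radical_eq_maximalIdeal
      ((Ideal.radical_pow J (by omega)).trans hJrad))
  rw [← ENat.natCast_toNat hfin, Nat.cast_le] at hlen
  norm_cast
  calc Module.finrank (MvPowerSeries (Fin d) k) A * (n + 1) ^ d
      ≤ Module.finrank (MvPowerSeries (Fin d) k) A * (d.factorial * S.card) := by gcongr
    _ = d.factorial * (S.card * Module.finrank (MvPowerSeries (Fin d) k) A) := by ring
    _ ≤ d.factorial * (Module.length A (A ⧸ J ^ (n + 1 + s))).toNat := by gcongr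

end Multiplicity

section TightClosure

variable {A : Type*} [CommRing A] {p : ℕ}

theorem one_mem_ringCirc : (1 : A) ∈ ringCirc A :=
  fun _ hP h1 ↦ hP.1.1.ne_top ((Ideal.eq_top_iff_one _).mpr h1)

theorem subset_tightClosure (I : Ideal A) : (I : Set A) ⊆ tightClosure p I :=
  fun a ha ↦ ⟨1, one_mem_ringCirc, 0, fun _ _ ↦ (one_mul (a ^ _)).symm ▸
    Ideal.subset_span ⟨a, ha, rfl⟩⟩

theorem tightClosure_mono {I J : Ideal A} (h : I ≤ J) : tightClosure p I ⊆ tightClosure p J :=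
  fun _ ⟨c, hc, N, hN⟩ ↦ ⟨c, hc, N, fun e he ↦ Ideal.span_mono (Set.image_mono h) (hN e he)⟩

theorem bracketPow_one (I : Ideal A) : I.bracketPow 1 = I := by
  simp only [Ideal.bracketPow, pow_one, Set.image_id', Ideal.span_eq]

variable [ExpChar A p]

theorem bracketPow_eq_map (I : Ideal A) (e : ℕ) :
    I.bracketPow (p ^ e) = I.map (iterateFrobenius A p e) := rfl

theorem map_iterateFrobenius_map_powerIdeal {ι R : Type*} [CommRing R] (f : R →+* A) (x : ι → R)
    (n e : ℕ) : ((powerIdeal x n).map f).map (iterateFrobenius A p e) =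
      (powerIdeal x (n * p ^ e)).map f := by
  rw [map_powerIdeal, map_powerIdeal, map_powerIdeal]
  simp only [powerIdeal, Function.comp_apply, iterateFrobenius_def, ← pow_mul, mul_comm]

open MvPowerSeries

variable {k σ : Type*} [Field k] [Algebra (MvPowerSeries σ k) A]
  [Module.Finite (MvPowerSeries σ k) A]

theorem mem_tightClosure_of_mem_limitClosure [Fintype σ]
    (hcirc : ∀ b : MvPowerSeries σ k, b ≠ 0 → algebraMap _ A b ∈ ringCirc A) {z : A}
    (hz : z ∈ limitClosure (X : σ → MvPowerSeries σ k) A) :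
    z ∈ tightClosure p ((powerIdeal X 1).map (algebraMap (MvPowerSeries σ k) A)) := by
  obtain ⟨c, hc, φ, ψ, hψφ, -⟩ := exists_linearMap_comp_eq_smul (R := MvPowerSeries σ k) (M := A)
  obtain ⟨n, hz⟩ := hz
  refine ⟨algebraMap _ A c, hcirc c hc, 0, fun e _ ↦ ?_⟩
  obtain ⟨q, hq⟩ := Nat.exists_eq_add_one.mpr (expChar_pow_pos A p e)
  have hzq : (∏ i, X i : MvPowerSeries σ k) ^ (n * p ^ e) • z ^ p ^ e ∈
      (powerIdeal (X : σ → MvPowerSeries σ k) ((n + 1) * p ^ e) • ⊤ :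
        Submodule (MvPowerSeries σ k) A) := by
    simp only [Ideal.smul_top_eq_map, Submodule.restrictScalars_mem] at hz ⊢
    rw [← map_iterateFrobenius_map_powerIdeal]
    have := Ideal.mem_map_of_mem (iterateFrobenius A p e) hz
    rwa [iterateFrobenius_def, smul_pow, ← pow_mul] at this
  have := smul_mem_smul_top_of_mul_mem hψφ (I' := powerIdeal X (p ^ e)) (fun f hf ↦ ?_) hzq
  · rwa [Ideal.smul_top_eq_map, Submodule.restrictScalars_mem, Algebra.smul_def,
      ← one_mul (p ^ e), ← map_iterateFrobenius_map_powerIdeal, ← bracketPow_eq_map,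
      one_mul] at this
  · rw [hq] at hf ⊢
    refine mem_powerIdeal_X_of_prod_X_pow_mul_mem (m := n * (q + 1)) ?_
    rwa [add_one_mul, ← add_assoc] at hf

section Length

variable [IsLocalRing A] [Algebra k A] [IsScalarTower k (MvPowerSeries σ k) A]
  (hk : Function.Surjective (algebraMap k (ResidueField A)))
  (hcirc : ∀ b : MvPowerSeries σ k, b ≠ 0 → algebraMap _ A b ∈ ringCirc A)
include hk hcirc

theorem length_quotient_span_tightClosure_le_length_quotient_limitClosure [Fintype σ] :
    Module.length A (A ⧸ Ideal.span (tightClosure p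
      ((powerIdeal X 1).map (algebraMap (MvPowerSeries σ k) A)))) ≤
      Module.length k (A ⧸ limitClosure (X : σ → MvPowerSeries σ k) A) := by
  rw [← length_quotient_restrictScalars (k := k) (B := MvPowerSeries σ k) hk]
  have hle : limitClosure (X : σ → MvPowerSeries σ k) A ≤ (Ideal.span (tightClosure p
      ((powerIdeal X 1).map (algebraMap (MvPowerSeries σ k) A)))).restrictScalars _ :=
    fun z hz ↦ Ideal.subset_span (mem_tightClosure_of_mem_limitClosure hcirc hz)
  exact Module.length_le_of_surjective ((Submodule.factor hle).restrictScalars k)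
    (Submodule.factor_surjective hle)

theorem free_and_span_tightClosure_eq_of_finrank_le [Finite σ] [IsReduced A]
    (h : (Module.finrank (MvPowerSeries σ k) A : ℕ∞) ≤ Module.length A (A ⧸ Ideal.span
      (tightClosure p ((powerIdeal X 1).map (algebraMap (MvPowerSeries σ k) A))))) :
    Module.Free (MvPowerSeries σ k) A ∧
      Ideal.span (tightClosure p ((powerIdeal X 1).map (algebraMap (MvPowerSeries σ k) A))) =
        (powerIdeal X 1).map (algebraMap (MvPowerSeries σ k) A) := by
  have := Fintype.ofFinite σ
  set J := (powerIdeal X 1).map (algebraMap (MvPowerSeries σ k) A)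
  have hlim : Module.length k (A ⧸ limitClosure (X : σ → MvPowerSeries σ k) A) ≤
      Module.finrank (MvPowerSeries σ k) A := length_quotient_limitClosure_le_finrank
  have : Module.IsTorsionFree (MvPowerSeries σ k) A :=
    isTorsionFree_of_algebraMap_mem_ringCirc hcirc
  have hfree : Module.Free (MvPowerSeries σ k) A := free_of_length_quotient_limitClosure_eq <|
    hlim.antisymm <| h.trans <|
      length_quotient_span_tightClosure_le_length_quotient_limitClosure hk hcirc
  have hJlim : Module.length A (A ⧸ J) ≤
      Module.length k (A ⧸ limitClosure (X : σ → MvPowerSeries σ k) A) := by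
    have hle := limitClosure_X_le_of_free (k := k) (σ := σ) (M := A)
    rw [Ideal.smul_top_eq_map] at hle
    rw [← length_quotient_restrictScalars (k := k) (B := MvPowerSeries σ k) hk]
    exact Module.length_le_of_surjective ((Submodule.factor hle).restrictScalars k)
      (Submodule.factor_surjective hle)
  refine ⟨hfree, (eq_of_le_of_not_lt ?_ fun hlt ↦ ?_).symm⟩
  · exact fun z hz ↦ Ideal.subset_span (subset_tightClosure J hz)
  have hfin : Module.length A (A ⧸ Ideal.span (tightClosure p J)) < ⊤ :=
    (length_quotient_span_tightClosure_le_length_quotient_limitClosure hk hcirc).trans_lt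
      (hlim.trans_lt (ENat.natCast_lt_top _))
  refine (h.trans_lt ?_).not_ge (hJlim.trans hlim)
  rw [Module.length_quotient] at hfin ⊢
  rw [Module.length_quotient]
  exact Order.coheight_strictAnti hlt hfin

end Length

end TightClosure

section NoetherNormalization

open MvPowerSeries
open RingTheory.Sequence (IsWeaklyRegular)

universe u

variable {A : Type u} [CommRing A]

section Finite

variable [IsLocalRing A] [IsNoetherianRing A] [IsAdicComplete (maximalIdeal A) A] {σ : Type*}
  [Finite σ] {x : σ → A}

theorem exists_finite_mvPowerSeries_of_surjective_residue {k : Type*} [Field k] {g : k →+* A}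
    (hg : Function.Surjective ((residue A).comp g))
    (hx : (Ideal.span (Set.range x)).radical = maximalIdeal A) :
    ∃ (_ : Algebra k A) (_ : Algebra (MvPowerSeries σ k) A)
      (_ : IsScalarTower k (MvPowerSeries σ k) A) (_ : Module.Finite (MvPowerSeries σ k) A),
      Function.Surjective (algebraMap k (ResidueField A)) ∧
        algebraMap (MvPowerSeries σ k) A ∘ X = x := by
  obtain ⟨φ, hφC, hφX⟩ := exists_mvPowerSeries_ringHom (maximalIdeal A) g (x := x)
    fun i ↦ hx ▸ Ideal.le_radical (Ideal.subset_span ⟨i, rfl⟩)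
  algebraize [g, φ]
  have hX : algebraMap (MvPowerSeries σ k) A ∘ X = x := funext hφX
  have : IsScalarTower k (MvPowerSeries σ k) A := .of_algebraMap_eq' hφC.symm
  refine ⟨_, _, this, finite_of_radical_map_span_X_eq hg ?_, hg, hX⟩
  rwa [Ideal.map_span, ← Set.range_comp, hX]

theorem exists_finite_mvPowerSeries (p : ℕ) [Fact p.Prime] [CharP A p]
    (hx : (Ideal.span (Set.range x)).radical = maximalIdeal A) :
    ∃ (k : Type u) (_ : Field k) (_ : Algebra k A) (_ : Algebra (MvPowerSeries σ k) A)
      (_ : IsScalarTower k (MvPowerSeries σ k) A) (_ : Module.Finite (MvPowerSeries σ k) A),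
      Function.Surjective (algebraMap k (ResidueField A)) ∧
        algebraMap (MvPowerSeries σ k) A ∘ X = x := by
  obtain ⟨g, hg⟩ := exists_coefficientField A p
  have hsurj : Function.Surjective ((residue A).comp g) := by
    rw [hg]
    exact Function.surjective_id
  exact ⟨ResidueField A, _, exists_finite_mvPowerSeries_of_surjective_residue hsurj hx⟩

end Finite

theorem algebraMap_mem_ringCirc_of_ringKrullDim_eq {k σ : Type*} [Field k] [Finite σ]
    [Algebra (MvPowerSeries σ k) A] [Algebra.IsIntegral (MvPowerSeries σ k) A]
    (hequi : ∀ P ∈ minimalPrimes A, ringKrullDim (A ⧸ P) = Nat.card σ)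
    {b : MvPowerSeries σ k} (hb : b ≠ 0) : algebraMap (MvPowerSeries σ k) A b ∈ ringCirc A := by
  intro P hP hbP
  have hbot := under_eq_bot_of_ringKrullDim_le (ringKrullDim_mvPowerSeries_le (k := k)) (hequi P hP)
  exact hb (by rwa [← Ideal.mem_comap, ← Ideal.under_def, hbot, Ideal.mem_bot] at hbP)

theorem isWeaklyRegular_map_X {R σ : Type*} [CommRing R] {l : List σ} (hl : l.Nodup) :
    IsWeaklyRegular (MvPowerSeries σ R) (l.map (X : σ → MvPowerSeries σ R)) := by
  classical
  refine ⟨fun n hn ↦ (isSMulRegular_quotient_iff_mem_of_smul_mem _ _).mpr fun f hf ↦ ?_⟩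
  rw [List.length_map] at hn
  have hspan : Ideal.ofList ((l.map (X : σ → MvPowerSeries σ R)).take n) =
      Ideal.span ((X : σ → MvPowerSeries σ R) '' (l.take n).toFinset) := by
    simp [← List.map_take, Ideal.ofList, Set.image]
  have hmem : l[n] ∉ (l.take n).toFinset := by
    rw [List.mem_toFinset, List.mem_take_iff_getElem]
    rintro ⟨j, hj, hjn⟩
    have := (hl.getElem_inj_iff).mp hjn
    lia
  rw [smul_eq_mul, Ideal.mul_top, hspan] at hf ⊢
  exact mem_span_X_of_X_mul_mem hmem (by simpa using hf)

theorem isWeaklyRegular_ofFn_algebraMap_X {R A : Type*} [CommRing R] [CommRing A] {d : ℕ}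
    [Algebra (MvPowerSeries (Fin d) R) A] [Module.Flat (MvPowerSeries (Fin d) R) A] :
    IsWeaklyRegular A (List.ofFn (algebraMap (MvPowerSeries (Fin d) R) A ∘ X)) := by
  have := (isWeaklyRegular_map_X (R := R) (List.nodup_finRange d)).of_flat (S := A)
  rwa [List.map_map, ← List.ofFn_eq_map] at this

end NoetherNormalization

section RegularExchange

open RingTheory.Sequence

variable {A : Type*} [CommRing A]

theorem ofList_eq_of_perm {l l' : List A} (h : l.Perm l') : Ideal.ofList l = Ideal.ofList l' :=
  congrArg Ideal.span (Set.ext fun _ ↦ h.mem_iff)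

theorem isWeaklyRegular_append_singleton_iff {l : List A} {x : A} :
    IsWeaklyRegular A (l ++ [x]) ↔
      IsWeaklyRegular A l ∧ ∀ z, x * z ∈ Ideal.ofList l → z ∈ Ideal.ofList l := by
  rw [isWeaklyRegular_append_iff, isWeaklyRegular_singleton_iff,
    isSMulRegular_quotient_iff_mem_of_smul_mem, smul_eq_mul, Ideal.mul_top]
  rfl

theorem mem_of_mul_mem_of_pow_mem_sup {I : Ideal A} {w v : A} {n : ℕ}
    (hw : ∀ z, w * z ∈ I → z ∈ I) (hwn : w ^ n ∈ Ideal.span {v} ⊔ I) {z : A} (hz : v * z ∈ I) :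
    z ∈ I := by
  have hpow : w ^ n * z ∈ I := by
    obtain ⟨u, c, hc, hu⟩ := Ideal.mem_span_singleton_sup.mp hwn
    rw [← hu, add_mul, mul_assoc]
    exact add_mem (Ideal.mul_mem_left _ _ hz) (Ideal.mul_mem_right _ _ hc)
  clear hwn
  induction n with
  | zero => simpa using hpow
  | succ n ih => exact ih (hw _ (by rwa [← mul_assoc, ← pow_succ']))

theorem isWeaklyRegular_append_singleton_of_pow_mem_sup {l : List A} {w v : A} {n : ℕ}
    (h : IsWeaklyRegular A (l ++ [w])) (hwn : w ^ n ∈ Ideal.span {v} ⊔ Ideal.ofList l) :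
    IsWeaklyRegular A (l ++ [v]) := by
  rw [isWeaklyRegular_append_singleton_iff] at h ⊢
  exact ⟨h.1, fun _ ↦ mem_of_mul_mem_of_pow_mem_sup h.2 hwn⟩

theorem isWeaklyRegular_map_pow_append [IsLocalRing A] [IsNoetherianRing A] {n : ℕ} (hn : n ≠ 0)
    {s t : List A} (h : IsWeaklyRegular A (s ++ t)) (hs : ∀ a ∈ s, a ∈ maximalIdeal A)
    (ht : ∀ a ∈ t, a ∈ maximalIdeal A) : IsWeaklyRegular A (s.map (· ^ n) ++ t) := by
  induction s generalizing t with
  | nil => exact h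
  | cons a s ih =>
    rw [List.forall_mem_cons] at hs
    have hpow : ∀ b ∈ s.map (· ^ n), b ∈ maximalIdeal A := by
      simpa using fun b hb ↦ Ideal.pow_mem_of_mem _ (hs.2 b hb) n (Nat.pos_of_ne_zero hn)
    have hrot : IsWeaklyRegular A (s ++ (t ++ [a])) := by
      refine isWeaklyRegular_of_perm_of_subset_maximalIdeal h ?_ ?_
      · rw [← List.append_assoc]
        exact List.perm_append_singleton a (s ++ t) |>.symm
      · grind
    have ha := ih hrot hs.2 (by grind)
    rw [← List.append_assoc] at ha
    refine isWeaklyRegular_of_perm_of_subset_maximalIdeal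
      (isWeaklyRegular_append_singleton_of_pow_mem_sup (n := n) (v := a ^ n) ha
        (Ideal.mem_sup_left (Ideal.mem_span_singleton_self _))) ?_ ?_
    · exact List.perm_append_singleton (a ^ n) _
    · have := Ideal.pow_mem_of_mem _ hs.1 n (Nat.pos_of_ne_zero hn)
      grind

end RegularExchange

section TightClosureExchange

variable {A : Type*} [CommRing A] {p : ℕ} [ExpChar A p] {I D : Ideal A}

theorem bracketPow_span_singleton_sup (D : Ideal A) (v : A) (e : ℕ) :
    (Ideal.span {v} ⊔ D).bracketPow (p ^ e) =
      Ideal.span {v ^ p ^ e} ⊔ D.bracketPow (p ^ e) := by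
  simp only [bracketPow_eq_map, Ideal.map_sup, Ideal.map_span, Set.image_singleton,
    iterateFrobenius_def]

theorem bracketPow_ofList (l : List A) (e : ℕ) :
    (Ideal.ofList l).bracketPow (p ^ e) = Ideal.ofList (l.map (· ^ p ^ e)) := by
  rw [bracketPow_eq_map, Ideal.map_ofList]
  rfl

theorem sub_mem_tightClosure {z a : A} (hz : z ∈ tightClosure p I) (ha : a ∈ I) :
    z - a ∈ tightClosure p I := by
  obtain ⟨c, hc, N, h⟩ := hz
  refine ⟨c, hc, N, fun e he ↦ ?_⟩
  rw [sub_pow_expChar_pow, mul_sub]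
  exact sub_mem (h e he) (Ideal.mul_mem_left _ _ (Ideal.subset_span ⟨a, ha, rfl⟩))

theorem mul_mem_tightClosure_span_mul_sup {v z : A} (u : A)
    (hz : z ∈ tightClosure p (Ideal.span {v} ⊔ D)) :
    u * z ∈ tightClosure p (Ideal.span {u * v} ⊔ D) := by
  obtain ⟨c, hc, N, h⟩ := hz
  refine ⟨c, hc, N, fun e he ↦ ?_⟩
  have hcz := h e he
  rw [bracketPow_span_singleton_sup, Ideal.mem_span_singleton_sup] at hcz ⊢
  obtain ⟨a, b, hb, hab⟩ := hcz
  refine ⟨a, u ^ p ^ e * b, Ideal.mul_mem_left _ _ hb, ?_⟩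
  linear_combination u ^ p ^ e * hab

section Regular

variable {w : A} (hw : ∀ e a, w * a ∈ D.bracketPow (p ^ e) → a ∈ D.bracketPow (p ^ e))
include hw

theorem mem_tightClosure_span_sup_of_mul_mem {v z : A}
    (hz : w * z ∈ tightClosure p (Ideal.span {w * v} ⊔ D)) :
    z ∈ tightClosure p (Ideal.span {v} ⊔ D) := by
  obtain ⟨c, hc, N, h⟩ := hz
  refine ⟨c, hc, N, fun e he ↦ ?_⟩
  have hcz := h e he
  rw [bracketPow_span_singleton_sup, Ideal.mem_span_singleton_sup] at hcz ⊢
  obtain ⟨a, b, hb, hab⟩ := hcz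
  have hmul : w ^ p ^ e * (c * z ^ p ^ e - a * v ^ p ^ e) ∈ D.bracketPow (p ^ e) := by
    convert hb using 1
    linear_combination -hab
  have hpow : w ^ p ^ e ∈ Ideal.span {w ^ p ^ e} ⊔ D.bracketPow (p ^ e) :=
    Ideal.mem_sup_left (Ideal.mem_span_singleton_self _)
  exact ⟨a, _, mem_of_mul_mem_of_pow_mem_sup (hw e) hpow hmul, by ring⟩

theorem tightClosure_span_pow_sup_subset
    (hT : tightClosure p (Ideal.span {w} ⊔ D) ⊆ ↑(Ideal.span {w} ⊔ D)) (n : ℕ) :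
    tightClosure p (Ideal.span {w ^ (n + 1)} ⊔ D) ⊆ ↑(Ideal.span {w ^ (n + 1)} ⊔ D) := by
  induction n with
  | zero => simpa only [zero_add, pow_one] using hT
  | succ n ih =>
    intro z hz
    have hle : Ideal.span {w ^ (n + 1 + 1)} ⊔ D ≤ Ideal.span {w} ⊔ D :=
      sup_le_sup_right (Ideal.span_singleton_le_span_singleton.mpr (dvd_pow_self w (by lia))) D
    obtain ⟨a, d, hd, rfl⟩ := Ideal.mem_span_singleton_sup.mp (hT (tightClosure_mono hle hz))
    have hwa : w * a ∈ tightClosure p (Ideal.span {w * w ^ (n + 1)} ⊔ D) := by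
      rw [← pow_succ']
      simpa [mul_comm] using sub_mem_tightClosure hz (Ideal.mem_sup_right hd)
    have ha := ih (mem_tightClosure_span_sup_of_mul_mem hw hwa)
    obtain ⟨b, c, hc, rfl⟩ := Ideal.mem_span_singleton_sup.mp ha
    refine Ideal.mem_span_singleton_sup.mpr ⟨b, c * w + d, ?_, by ring⟩
    exact add_mem (Ideal.mul_mem_right _ _ hc) hd

theorem tightClosure_span_sup_subset_of_pow_mem
    (hT : tightClosure p (Ideal.span {w} ⊔ D) ⊆ ↑(Ideal.span {w} ⊔ D)) {v : A} {n : ℕ}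
    (hwn : w ^ n ∈ Ideal.span {v} ⊔ D) :
    tightClosure p (Ideal.span {v} ⊔ D) ⊆ ↑(Ideal.span {v} ⊔ D) := by
  have hwD : ∀ a, w * a ∈ D → a ∈ D := by
    simpa only [pow_zero, bracketPow_one] using hw 0
  obtain ⟨u, c, hc, hu⟩ := Ideal.mem_span_singleton_sup.mp
    (Ideal.pow_mem_of_pow_mem _ hwn n.le_succ)
  have hspan : Ideal.span {u * v} ⊔ D = Ideal.span {w ^ (n + 1)} ⊔ D := by
    refine le_antisymm (sup_le ?_ le_sup_right) (sup_le ?_ le_sup_right) <;>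
      rw [Ideal.span_singleton_le_iff_mem, Ideal.mem_span_singleton_sup]
    · exact ⟨1, -c, neg_mem hc, by rw [← hu]; ring⟩
    · exact ⟨1, c, hc, by rw [← hu]; ring⟩
  intro z hz
  have huz : u * z ∈ Ideal.span {u * v} ⊔ D := by
    have := mul_mem_tightClosure_span_mul_sup u hz
    rw [hspan] at this ⊢
    exact tightClosure_span_pow_sup_subset hw hT n this
  obtain ⟨a, d, hd, had⟩ := Ideal.mem_span_singleton_sup.mp huz
  have hmul : u * (z - a * v) ∈ D := by
    convert hd using 1
    linear_combination -had
  have hwu : w ^ (n + 1) ∈ Ideal.span {u} ⊔ D :=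
    Ideal.mem_span_singleton_sup.mpr ⟨v, c, hc, by rw [← hu, mul_comm]⟩
  have hmem : z - a * v ∈ D := mem_of_mul_mem_of_pow_mem_sup hwD hwu hmul
  exact Ideal.mem_span_singleton_sup.mpr ⟨a, _, hmem, by ring⟩

end Regular

end TightClosureExchange

section Height

variable {A : Type*} [CommRing A] {l : List A}

theorem ofList_ofFn {n : ℕ} (x : Fin n → A) :
    Ideal.ofList (List.ofFn x) = Ideal.span (Set.range x) := by
  simp [Ideal.ofList, Set.range, List.mem_ofFn]

theorem height_le_length_of_mem_minimalPrimes_ofList [IsNoetherianRing A] {Q : Ideal A}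
    (hQ : Q ∈ (Ideal.ofList l).minimalPrimes) : Q.height ≤ l.length := by
  classical
  have hfin : {a | a ∈ l} = (l.toFinset : Set A) := List.coe_toFinset l |>.symm
  rw [Ideal.ofList, hfin] at hQ
  exact (Ideal.height_le_card_of_mem_minimalPrimes_span_finset hQ).trans
    (mod_cast l.toFinset_card_le)

theorem length_cons_le_height_ofList_cons {w : A}
    (hl : (l.length : ℕ∞) ≤ (Ideal.ofList l).height)
    (hw : ∀ Q ∈ (Ideal.ofList l).minimalPrimes, w ∉ Q) :
    ((w :: l).length : ℕ∞) ≤ (Ideal.ofList (w :: l)).height := by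
  rw [Ideal.height_eq_inf_minimalPrimes (I := Ideal.ofList (w :: l))]
  refine le_iInf₂ fun Q hQ ↦ ?_
  have hmem : ∀ b ∈ w :: l, b ∈ Q := fun b hb ↦ hQ.1.2 (Ideal.subset_span hb)
  have := hQ.1.1
  have hle : Ideal.ofList l ≤ Q := Ideal.span_le.mpr fun b hb ↦ hmem b (List.mem_cons_of_mem w hb)
  obtain ⟨P, hP, hPQ⟩ := Ideal.exists_minimalPrimes_le hle
  have := hP.1.1
  have hlt : P < Q := hPQ.lt_of_ne fun h ↦ hw P hP (h ▸ hmem w List.mem_cons_self)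
  calc ((w :: l).length : ℕ∞) = l.length + 1 := by simp
    _ ≤ P.height + 1 := by gcongr; exact hl.trans (Ideal.height_mono hP.1.2)
    _ ≤ Q.height := Ideal.height_add_one_le_of_lt_of_isPrime hlt

end Height

section SystemsOfParameters

variable {A : Type*} [CommRing A] [IsLocalRing A]

theorem radical_eq_maximalIdeal_iff {I : Ideal A} : I.radical = maximalIdeal A ↔
    I ≤ maximalIdeal A ∧ ∀ Q : Ideal A, Q.IsPrime → I ≤ Q → Q = maximalIdeal A := by
  refine ⟨fun h ↦ ⟨h ▸ Ideal.le_radical, fun Q hQ hIQ ↦ ?_⟩, fun ⟨hle, h⟩ ↦ ?_⟩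
  · exact (le_maximalIdeal hQ.ne_top).antisymm (h ▸ hQ.radical_le_iff.mpr hIQ)
  · refine ((maximalIdeal.isMaximal A).isPrime.radical_le_iff.mpr hle).antisymm ?_
    rw [Ideal.radical_eq_sInf]
    exact le_sInf fun Q hQ ↦ (h Q hQ.2 hQ.1).ge

theorem exists_mem_maximalIdeal_forall_notMem {S : Set (Ideal A)} (hS : S.Finite)
    (hprime : ∀ Q ∈ S, Q.IsPrime) (hne : ∀ Q ∈ S, Q ≠ maximalIdeal A) :
    ∃ w ∈ maximalIdeal A, ∀ Q ∈ S, w ∉ Q := by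
  by_contra! h
  have hsub : (maximalIdeal A : Set A) ⊆ ⋃ Q ∈ S, Q := fun w hw ↦ by
    simpa only [Set.mem_iUnion, exists_prop, SetLike.mem_coe] using h w hw
  obtain ⟨Q, hQ, hle⟩ :=
    (Ideal.subset_union_prime_finite hS (f := id) ⊥ ⊥ fun Q hQ _ _ ↦ hprime Q hQ).mp hsub
  exact hne Q hQ ((le_maximalIdeal (hprime Q hQ).ne_top).antisymm hle)

/-- A list of elements of a local ring is a (full) system of parameters if its length is the
dimension of the ring and it generates an ideal primary to the maximal ideal. -/
structure IsSystemOfParameters (l : List A) : Prop where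
  ringKrullDim_eq : ringKrullDim A = l.length
  radical_ofList : (Ideal.ofList l).radical = maximalIdeal A

theorem IsSystemOfParameters.mem_maximalIdeal {l : List A} (h : IsSystemOfParameters l) {a : A}
    (ha : a ∈ l) : a ∈ maximalIdeal A :=
  h.radical_ofList ▸ Ideal.le_radical (Ideal.subset_span ha)

theorem IsSystemOfParameters.of_perm {l l' : List A} (h : IsSystemOfParameters l)
    (hl : l.Perm l') : IsSystemOfParameters l' :=
  ⟨hl.length_eq ▸ h.1, ofList_eq_of_perm hl ▸ h.2⟩

variable [IsNoetherianRing A]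

theorem ne_maximalIdeal_of_mem_minimalPrimes_ofList {l : List A}
    (hl : (l.length : WithBot ℕ∞) < ringKrullDim A) {Q : Ideal A}
    (hQ : Q ∈ (Ideal.ofList l).minimalPrimes) : Q ≠ maximalIdeal A := by
  rintro rfl
  rw [← maximalIdeal_height_eq_ringKrullDim] at hl
  exact (height_le_length_of_mem_minimalPrimes_ofList hQ).not_gt (mod_cast hl)

theorem IsSystemOfParameters.cons_of_forall_notMem {a w : A} {l : List A}
    (h : IsSystemOfParameters (a :: l)) (hw : w ∈ maximalIdeal A)
    (hwQ : ∀ Q ∈ (Ideal.ofList l).minimalPrimes, w ∉ Q) : IsSystemOfParameters (w :: l) := by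
  refine ⟨h.1, radical_eq_maximalIdeal_iff.mpr ⟨?_, fun Q hQ hle ↦ by_contra fun hne ↦ ?_⟩⟩
  · exact Ideal.span_le.mpr (List.forall_mem_cons.mpr ⟨hw, fun b hb ↦
      h.mem_maximalIdeal (List.mem_cons_of_mem a hb)⟩)
  have hmem : ∀ b ∈ w :: l, b ∈ Q := fun b hb ↦ hle (Ideal.subset_span hb)
  have hmin : maximalIdeal A ∈ (Ideal.span (insert a {b | b ∈ l})).minimalPrimes := by
    have hset : Ideal.span (insert a {b | b ∈ l}) = Ideal.ofList (a :: l) := by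
      congr 1; ext; simp
    rw [hset, ← Ideal.radical_minimalPrimes, h.radical_ofList,
      Ideal.minimalPrimes_eq_subsingleton_self]
    rfl
  refine hwQ Q ?_ (hmem w List.mem_cons_self)
  refine Ideal.mem_minimalPrimes_span_of_mem_minimalPrimes_span_insert
    ((le_maximalIdeal hQ.ne_top).lt_of_ne hne) a _ hmin _ ?_ ?_
  · exact fun b hb ↦ hmem b (List.mem_cons_of_mem w hb)
  · exact fun b hb ↦ Ideal.le_radical (Ideal.subset_span (Set.mem_insert_of_mem a hb))

theorem IsSystemOfParameters.exists_cons {a b : A} {s t : List A}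
    (hs : IsSystemOfParameters (a :: s)) (ht : IsSystemOfParameters (b :: t)) :
    ∃ w, IsSystemOfParameters (w :: s) ∧ IsSystemOfParameters (w :: t) := by
  have hlt {c : A} {l : List A} (hl : IsSystemOfParameters (c :: l)) :
      (l.length : WithBot ℕ∞) < ringKrullDim A := by
    rw [hl.ringKrullDim_eq]
    exact_mod_cast l.length.lt_succ_self
  obtain ⟨w, hw, hwQ⟩ := exists_mem_maximalIdeal_forall_notMem
    (S := (Ideal.ofList s).minimalPrimes ∪ (Ideal.ofList t).minimalPrimes)
    ((Ideal.finite_minimalPrimes_of_isNoetherianRing A _).union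
      (Ideal.finite_minimalPrimes_of_isNoetherianRing A _))
    (fun Q hQ ↦ hQ.elim (·.1.1) (·.1.1))
    (fun Q hQ ↦ hQ.elim (ne_maximalIdeal_of_mem_minimalPrimes_ofList (hlt hs))
      (ne_maximalIdeal_of_mem_minimalPrimes_ofList (hlt ht)))
  exact ⟨w, hs.cons_of_forall_notMem hw fun Q hQ ↦ hwQ Q (.inl hQ),
    ht.cons_of_forall_notMem hw fun Q hQ ↦ hwQ Q (.inr hQ)⟩

theorem exists_isSystemOfParameters_append {l : List A} (hm : ∀ a ∈ l, a ∈ maximalIdeal A)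
    (hl : (l.length : ℕ∞) ≤ (Ideal.ofList l).height) {j : ℕ}
    (hj : ringKrullDim A = (l.length + j : ℕ)) : ∃ z, IsSystemOfParameters (z ++ l) := by
  induction j generalizing l with
  | zero =>
    refine ⟨[], hj, radical_eq_maximalIdeal_iff.mpr ⟨Ideal.span_le.mpr hm, fun Q hQ hle ↦ ?_⟩⟩
    refine Ideal.eq_of_le_of_height_le _ (le_maximalIdeal hQ.ne_top) ?_
    rw [← maximalIdeal_height_eq_ringKrullDim] at hj
    calc (maximalIdeal A).height = l.length := mod_cast hj
      _ ≤ Q.height := hl.trans (Ideal.height_mono hle)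
  | succ j ih =>
    have hlt : (l.length : WithBot ℕ∞) < ringKrullDim A := by
      rw [hj]
      exact_mod_cast Nat.lt_add_of_pos_right j.succ_pos
    obtain ⟨w, hw, hwQ⟩ := exists_mem_maximalIdeal_forall_notMem
      (Ideal.finite_minimalPrimes_of_isNoetherianRing A (Ideal.ofList l)) (fun Q hQ ↦ hQ.1.1)
      fun Q hQ ↦ ne_maximalIdeal_of_mem_minimalPrimes_ofList hlt hQ
    obtain ⟨z, hz⟩ := ih (List.forall_mem_cons.mpr ⟨hw, hm⟩)
      (length_cons_le_height_ofList_cons hl hwQ)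
      (by rw [hj, List.length_cons, add_right_comm, add_assoc])
    exact ⟨z ++ [w], by simpa using hz⟩

end SystemsOfParameters

section FRational

open RingTheory.Sequence

variable {A : Type*} [CommRing A] [IsLocalRing A] {p : ℕ}

variable (p) in
/-- A regular sequence in the maximal ideal which generates a tightly closed ideal. These are the
sequences that can be exchanged for one another by `IsTightlyClosedRegular.of_isSystemOfParameters`.
-/
structure IsTightlyClosedRegular (l : List A) : Prop where
  isWeaklyRegular : IsWeaklyRegular A l
  mem_maximalIdeal : ∀ a ∈ l, a ∈ maximalIdeal A
  tightClosure_subset : tightClosure p (Ideal.ofList l) ⊆ Ideal.ofList l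

namespace IsTightlyClosedRegular

variable [IsNoetherianRing A]

theorem of_perm {l l' : List A} (h : IsTightlyClosedRegular p l) (hl : l.Perm l') :
    IsTightlyClosedRegular p l' :=
  ⟨isWeaklyRegular_of_perm_of_subset_maximalIdeal h.1 hl h.2,
    fun a ha ↦ h.2 a (hl.mem_iff.mpr ha), ofList_eq_of_perm hl ▸ h.3⟩

variable [ExpChar A p]

theorem exchange {v w : A} {l : List A} (h : IsTightlyClosedRegular p (w :: l))
    (hv : IsSystemOfParameters (v :: l)) : IsTightlyClosedRegular p (v :: l) := by
  have hmem : ∀ a ∈ v :: l, a ∈ maximalIdeal A := fun _ ↦ hv.mem_maximalIdeal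
  have hlast : IsWeaklyRegular A (l ++ [w]) :=
    (h.of_perm (List.perm_append_singleton w l).symm).isWeaklyRegular
  obtain ⟨n, hn⟩ : w ∈ (Ideal.span {v} ⊔ Ideal.ofList l).radical := by
    rw [← Ideal.ofList_cons, hv.radical_ofList]
    exact h.mem_maximalIdeal w List.mem_cons_self
  have hw (e : ℕ) (a : A) (ha : w * a ∈ (Ideal.ofList l).bracketPow (p ^ e)) :
      a ∈ (Ideal.ofList l).bracketPow (p ^ e) := by
    have hpow := isWeaklyRegular_map_pow_append (expChar_pow_pos A p e).ne' hlast
      (fun b hb ↦ hmem b (List.mem_cons_of_mem v hb))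
      (by simpa using h.mem_maximalIdeal w List.mem_cons_self)
    rw [bracketPow_ofList] at ha ⊢
    exact (isWeaklyRegular_append_singleton_iff.mp hpow).2 a ha
  refine ⟨?_, hmem, ?_⟩
  · refine isWeaklyRegular_of_perm_of_subset_maximalIdeal
      (isWeaklyRegular_append_singleton_of_pow_mem_sup hlast hn)
      (List.perm_append_singleton v l) ?_
    simpa [or_imp, forall_and, and_comm] using hmem
  · have hT := h.tightClosure_subset
    rw [Ideal.ofList_cons] at hT ⊢
    exact tightClosure_span_sup_subset_of_pow_mem hw hT hn

theorem append_of_isSystemOfParameters {l₁ l₂ t : List A} (hlen : l₁.length = l₂.length)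
    (h : IsTightlyClosedRegular p (l₁ ++ t)) (h₁ : IsSystemOfParameters (l₁ ++ t))
    (h₂ : IsSystemOfParameters (l₂ ++ t)) : IsTightlyClosedRegular p (l₂ ++ t) := by
  induction l₁ generalizing l₂ t with
  | nil => rwa [List.length_eq_zero_iff.mp hlen.symm]
  | cons a l₁ ih =>
    obtain ⟨b, l₂, rfl⟩ := List.exists_cons_of_length_eq_add_one hlen.symm
    obtain ⟨w, hw₁, hw₂⟩ := IsSystemOfParameters.exists_cons h₁ h₂
    have hmid (l : List A) : (w :: (l ++ t)).Perm (l ++ w :: t) := List.perm_middle.symm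
    have h₂' : IsTightlyClosedRegular p (l₂ ++ w :: t) :=
      ih (by simpa using hlen) ((h.exchange hw₁).of_perm (hmid l₁)) (hw₁.of_perm (hmid l₁))
        (hw₂.of_perm (hmid l₂))
    exact (h₂'.of_perm (hmid l₂).symm).exchange h₂

theorem of_isSystemOfParameters {l l' : List A} (h : IsTightlyClosedRegular p l)
    (hl : IsSystemOfParameters l) (hl' : IsSystemOfParameters l') :
    IsTightlyClosedRegular p l' := by
  have hlen : l.length = l'.length := by
    exact_mod_cast hl.ringKrullDim_eq.symm.trans hl'.ringKrullDim_eq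
  simpa using append_of_isSystemOfParameters (t := []) hlen (by simpa) (by simpa) (by simpa)

end IsTightlyClosedRegular

theorem IsSystemOfParameters.map_pow_append {s t : List A} (h : IsSystemOfParameters (s ++ t))
    {n : ℕ} (hn : n ≠ 0) : IsSystemOfParameters (s.map (· ^ n) ++ t) := by
  refine ⟨by simpa using h.1, radical_eq_maximalIdeal_iff.mpr ⟨?_, fun Q hQ hle ↦ ?_⟩⟩
  · refine Ideal.span_le.mpr (List.forall_mem_append.mpr ⟨List.forall_mem_map.mpr ?_, ?_⟩)
    · exact fun a ha ↦ Ideal.pow_mem_of_mem _ (h.mem_maximalIdeal (List.mem_append_left t ha)) n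
        (Nat.pos_of_ne_zero hn)
    · exact fun a ha ↦ h.mem_maximalIdeal (List.mem_append_right s ha)
  · refine (radical_eq_maximalIdeal_iff.mp h.2).2 Q hQ
      (Ideal.span_le.mpr (List.forall_mem_append.mpr ⟨fun a ha ↦ ?_, fun a ha ↦ ?_⟩))
    · have : a ^ n ∈ s.map (· ^ n) ++ t := List.mem_append_left t (List.mem_map_of_mem ha)
      exact hQ.mem_of_pow_mem n (hle (Ideal.subset_span this))
    · exact hle (Ideal.subset_span (List.mem_append_right _ ha))

theorem idealHeight_eq_height {R : Type*} [CommRing R] (I : Ideal R) :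
    idealHeight I = I.height := by
  refine le_antisymm ?_ (le_iInf₂ fun P hP ↦ ?_)
  · rw [Ideal.height_eq_inf_minimalPrimes]
    refine le_iInf₂ fun P hP ↦ ?_
    rw [PrimeSpectrum.height_eq_orderHeight ⟨P, hP.1.1⟩]
    exact iInf₂_le (⟨P, hP.1.1⟩ : PrimeSpectrum R) hP.1.2
  · rw [← PrimeSpectrum.height_eq_orderHeight]
    exact Ideal.height_mono hP

theorem IsTightlyClosedRegular.tightClosure_ofList_subset [IsNoetherianRing A] [ExpChar A p]
    {l y : List A} (h : IsTightlyClosedRegular p l) (hl : IsSystemOfParameters l)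
    (hy : (Ideal.ofList y).height = y.length) :
    tightClosure p (Ideal.ofList y) ⊆ Ideal.ofList y := by
  have hne : Ideal.ofList y ≠ ⊤ := by
    rintro htop
    rw [htop, Ideal.height_top] at hy
    exact ENat.top_ne_natCast _ hy
  obtain ⟨j, hj⟩ : ∃ j, l.length = y.length + j := Nat.exists_eq_add_of_le <| by
    have := Ideal.height_le_ringKrullDim_of_ne_top hne
    rw [hy, hl.ringKrullDim_eq] at this
    exact_mod_cast this
  obtain ⟨z, hz⟩ := exists_isSystemOfParameters_append
    (fun a ha ↦ le_maximalIdeal hne (Ideal.subset_span ha)) hy.ge (hj ▸ hl.ringKrullDim_eq)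
  intro a ha
  refine mem_of_forall_mem_sup_maximalIdeal_pow fun n ↦ ?_
  have hpow := h.of_isSystemOfParameters hl (hz.map_pow_append n.succ_ne_zero)
  have hyz : Ideal.ofList y ≤ Ideal.ofList (z.map (· ^ (n + 1)) ++ y) := by
    rw [Ideal.ofList_append]
    exact le_sup_right
  have hzpow : Ideal.ofList (z.map (· ^ (n + 1))) ≤ maximalIdeal A ^ n := by
    refine Ideal.span_le.mpr (List.forall_mem_map.mpr fun b hb ↦ ?_)
    exact Ideal.pow_le_pow_right n.le_succ
      (Ideal.pow_mem_pow (hz.mem_maximalIdeal (List.mem_append_left y hb)) _)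
  have haz := hpow.tightClosure_subset (tightClosure_mono hyz ha)
  rw [Ideal.ofList_append, sup_comm] at haz
  exact sup_le_sup_left hzpow _ haz

theorem IsTightlyClosedRegular.fRationalLocal [IsNoetherianRing A] [ExpChar A p]
    {l : List A} (h : IsTightlyClosedRegular p l) (hl : IsSystemOfParameters l) :
    FRationalLocal A p := by
  rintro I ⟨n, hn, y, rfl⟩
  refine Set.Subset.antisymm ?_ (subset_tightClosure _)
  rw [← ofList_ofFn] at hn ⊢
  exact h.tightClosure_ofList_subset hl (by rwa [← idealHeight_eq_height, List.length_ofFn])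

end FRational

section Equality

open MvPowerSeries

variable {A : Type*} [CommRing A] [IsLocalRing A] {p d : ℕ} [ExpChar A p] {k : Type*} [Field k]
  [Algebra k A] [Algebra (MvPowerSeries (Fin d) k) A] [IsScalarTower k (MvPowerSeries (Fin d) k) A]
  [Module.Finite (MvPowerSeries (Fin d) k) A]

theorem fRationalLocal_of_finrank_le [IsNoetherianRing A] [IsReduced A]
    (hd : ringKrullDim A = d)
    (hk : Function.Surjective (algebraMap k (ResidueField A)))
    (hcirc : ∀ b : MvPowerSeries (Fin d) k, b ≠ 0 → algebraMap _ A b ∈ ringCirc A)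
    {J : Ideal A} (hJ : (powerIdeal X 1).map (algebraMap (MvPowerSeries (Fin d) k) A) = J)
    (hJrad : J.radical = maximalIdeal A)
    (h : (Module.finrank (MvPowerSeries (Fin d) k) A : ℕ∞) ≤
      Module.length A (A ⧸ Ideal.span (tightClosure p J))) : FRationalLocal A p := by
  subst hJ
  obtain ⟨hfree, htight⟩ := free_and_span_tightClosure_eq_of_finrank_le hk hcirc h
  have hlist : Ideal.ofList (List.ofFn (algebraMap (MvPowerSeries (Fin d) k) A ∘ X)) =
      (powerIdeal X 1).map (algebraMap (MvPowerSeries (Fin d) k) A) := by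
    rw [ofList_ofFn, map_powerIdeal, powerIdeal_one]
  have hsop : IsSystemOfParameters (List.ofFn (algebraMap (MvPowerSeries (Fin d) k) A ∘ X)) :=
    ⟨by rwa [List.length_ofFn], by rwa [hlist]⟩
  have hreg : IsTightlyClosedRegular p (List.ofFn (algebraMap (MvPowerSeries (Fin d) k) A ∘ X)) :=
    ⟨isWeaklyRegular_ofFn_algebraMap_X, fun a ↦ hsop.mem_maximalIdeal, by
      rw [hlist]
      exact Ideal.subset_span.trans htight.le⟩
  exact hreg.fRationalLocal hsop

end Equality

end GotoNakamura

/-- **Goto–Nakamura.** Let `J` be an `𝔪`-primary parameter ideal (generated by `d`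
elements) of a `d`-dimensional complete equidimensional reduced Noetherian local ring of
characteristic `p`. Then `ℓ_A(A/J^*) ≤ e(J)`; moreover, if `ℓ_A(A/J^*) = e(J)`, then `A`
is F-rational. -/
theorem goto_nakamura (A : Type*) [CommRing A] [IsLocalRing A]
    [IsNoetherianRing A] [IsReduced A] (p : ℕ) [Fact p.Prime] [CharP A p]
    (hcomp : IsAdicComplete (IsLocalRing.maximalIdeal A) A)
    (d : ℕ) (hd : ringKrullDim A = d)
    (hequi : ∀ P ∈ minimalPrimes A, ringKrullDim (A ⧸ P) = d)
    (J : Ideal A) (hJrad : J.radical = IsLocalRing.maximalIdeal A)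
    (x : Fin d → A) (hJ : J = Ideal.span (Set.range x))
    (eJ : ℝ)
    (heJ : Filter.Tendsto
      (fun n : ℕ =>
        (d.factorial : ℝ) * ((moduleLength A (A ⧸ J ^ n)).toNat : ℝ) / (n : ℝ) ^ d)
      Filter.atTop (nhds eJ)) :
    (∃ l : ℕ, moduleLength A (A ⧸ Ideal.span (tightClosure p J)) = l ∧ (l : ℝ) ≤ eJ) ∧
      ((∃ l : ℕ, moduleLength A (A ⧸ Ideal.span (tightClosure p J)) = l ∧ (l : ℝ) = eJ) →
        FRationalLocal A p) := by
  simp only [moduleLength, ← Module.length_eq_height] at heJ ⊢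
  obtain ⟨k, _, _, _, _, _, hk, rfl⟩ := GotoNakamura.exists_finite_mvPowerSeries p (hJ ▸ hJrad)
  rw [← GotoNakamura.powerIdeal_one, ← GotoNakamura.map_powerIdeal] at hJ
  have hcirc (b : MvPowerSeries (Fin d) k) (hb : b ≠ 0) : algebraMap _ A b ∈ ringCirc A :=
    GotoNakamura.algebraMap_mem_ringCirc_of_ringKrullDim_eq
      (fun P hP ↦ by rw [hequi P hP, Nat.card_fin]) hb
  have hlength : Module.length A (A ⧸ Ideal.span (tightClosure p J)) ≤
      Module.finrank (MvPowerSeries (Fin d) k) A := by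
    rw [hJ]
    exact (GotoNakamura.length_quotient_span_tightClosure_le_length_quotient_limitClosure
      hk hcirc).trans GotoNakamura.length_quotient_limitClosure_le_finrank
  have hmult : (Module.finrank (MvPowerSeries (Fin d) k) A : ℝ) ≤ eJ :=
    GotoNakamura.finrank_le_of_hasHilbertSamuelMultiplicity hk hJ.symm hJrad heJ
  constructor
  · obtain ⟨l, hl⟩ := ENat.ne_top_iff_exists.mp (hlength.trans_lt (ENat.natCast_lt_top _)).ne
    rw [← hl, Nat.cast_le] at hlength
    exact ⟨l, hl.symm, (Nat.cast_le.mpr hlength).trans hmult⟩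
  · rintro ⟨l, hl, rfl⟩
    refine GotoNakamura.fRationalLocal_of_finrank_le hd hk hcirc hJ.symm hJrad ?_
    rw [hl]
    exact_mod_cast hmult
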